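/- arXiv:1907.02135 — 2 statements merged into one kernel-verified Lean document; each statement's English description precedes it below -/
import Mathlib

section
/- The homomorphism ♮ sends α ↦ (1⊗Λ − a(a+1)⊗1)·(b(b+1)⊗1 − c(c+1)⊗1), β ↦ (1⊗Λ − b(b+1)⊗1)·(c(c+1)⊗1 − a(a+1)⊗1), γ ↦ (1⊗Λ − c(c+1)⊗1)·(a(a+1)⊗1 − b(b+1)⊗1), and δ ↦ 1⊗Λ + a(a+1)⊗1 + b(b+1)⊗1 + c(c+1)⊗1. -/
open scoped TensorProduct

noncomputable section

namespace RacahPaper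

variable (F : Type) [Field F]

/-- Defining relations of `U(sl₂)`: generators `e = ι 0`, `f = ι 1`, `h = ι 2` with
`he - eh = 2e`, `hf - fh = -2f`, `ef - fe = h`. -/
inductive slRel : FreeAlgebra F (Fin 3) → FreeAlgebra F (Fin 3) → Prop
  | he : slRel (FreeAlgebra.ι F 2 * FreeAlgebra.ι F 0 - FreeAlgebra.ι F 0 * FreeAlgebra.ι F 2)
      (2 * FreeAlgebra.ι F 0)
  | hf : slRel (FreeAlgebra.ι F 2 * FreeAlgebra.ι F 1 - FreeAlgebra.ι F 1 * FreeAlgebra.ι F 2)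
      (-(2 * FreeAlgebra.ι F 1))
  | ef : slRel (FreeAlgebra.ι F 0 * FreeAlgebra.ι F 1 - FreeAlgebra.ι F 1 * FreeAlgebra.ι F 0)
      (FreeAlgebra.ι F 2)

/-- The universal enveloping algebra `U(sl₂)`. -/
abbrev U := RingQuot (slRel F)

/-- The generator `e` of `U(sl₂)`. -/
def e : U F := RingQuot.mkAlgHom F (slRel F) (FreeAlgebra.ι F 0)

/-- The generator `f` of `U(sl₂)`. -/
def f : U F := RingQuot.mkAlgHom F (slRel F) (FreeAlgebra.ι F 1)

/-- The generator `h` of `U(sl₂)`. -/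
def h : U F := RingQuot.mkAlgHom F (slRel F) (FreeAlgebra.ι F 2)

/-- The equitable generator `x = -f - h/2`. -/
def ux : U F := -f F - (2 : F)⁻¹ • h F

/-- The equitable generator `y = h/2`. -/
def uy : U F := (2 : F)⁻¹ • h F

/-- The equitable generator `z = e - h/2`. -/
def uz : U F := e F - (2 : F)⁻¹ • h F

/-- The normalized Casimir element `Λ = ef + h(h-2)/4` of `U(sl₂)`. -/
def Lam : U F := e F * f F + (4 : F)⁻¹ • (h F * (h F - 2))

/-- `ν_x = f/2`. -/
def nux : U F := (2 : F)⁻¹ • f F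

/-- `ν_z = e/2`. -/
def nuz : U F := (2 : F)⁻¹ • e F

/-- `U_n`: the span of the `e^i h^j f^k` with `k - i = n`. -/
def Usub (n : ℤ) : Submodule F (U F) :=
  Submodule.span F {u : U F | ∃ i j k : ℕ, (k : ℤ) - (i : ℤ) = n ∧ u = e F ^ i * h F ^ j * f F ^ k}

-- Racah algebra
/-- Generator `A` of the free algebra. -/
def fA : FreeAlgebra F (Fin 4) := FreeAlgebra.ι F 0
/-- Generator `B` of the free algebra. -/
def fB : FreeAlgebra F (Fin 4) := FreeAlgebra.ι F 1
/-- Generator `C` of the free algebra. -/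
def fC : FreeAlgebra F (Fin 4) := FreeAlgebra.ι F 2
/-- Generator `D` of the free algebra. -/
def fD : FreeAlgebra F (Fin 4) := FreeAlgebra.ι F 3

/-- `α = [A,D] + AC - BA` in the free algebra. -/
def falpha : FreeAlgebra F (Fin 4) := (fA F * fD F - fD F * fA F) + fA F * fC F - fB F * fA F
/-- `β = [B,D] + BA - CB` in the free algebra. -/
def fbeta : FreeAlgebra F (Fin 4) := (fB F * fD F - fD F * fB F) + fB F * fA F - fC F * fB F
/-- `γ = [C,D] + CB - AC` in the free algebra. -/
def fgamma : FreeAlgebra F (Fin 4) := (fC F * fD F - fD F * fC F) + fC F * fB F - fA F * fC F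

/-- Defining relations of the Racah algebra: `[A,B] = [B,C] = [C,A] = 2D` and each of
`α, β, γ` commutes with each of the generators `A, B, C, D`. -/
inductive racahRel : FreeAlgebra F (Fin 4) → FreeAlgebra F (Fin 4) → Prop
  | AB : racahRel (fA F * fB F - fB F * fA F) (2 * fD F)
  | BC : racahRel (fB F * fC F - fC F * fB F) (2 * fD F)
  | CA : racahRel (fC F * fA F - fA F * fC F) (2 * fD F)
  | calpha (i : Fin 4) : racahRel (falpha F * FreeAlgebra.ι F i) (FreeAlgebra.ι F i * falpha F)
  | cbeta (i : Fin 4) : racahRel (fbeta F * FreeAlgebra.ι F i) (FreeAlgebra.ι F i * fbeta F)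
  | cgamma (i : Fin 4) : racahRel (fgamma F * FreeAlgebra.ι F i) (FreeAlgebra.ι F i * fgamma F)

/-- The Racah algebra `ℜ`. -/
abbrev Racah := RingQuot (racahRel F)

/-- Generator `A` of the Racah algebra. -/
def A : Racah F := RingQuot.mkAlgHom F (racahRel F) (fA F)
/-- Generator `B` of the Racah algebra. -/
def B : Racah F := RingQuot.mkAlgHom F (racahRel F) (fB F)
/-- Generator `C` of the Racah algebra. -/
def C : Racah F := RingQuot.mkAlgHom F (racahRel F) (fC F)
/-- Generator `D` of the Racah algebra. -/
def D : Racah F := RingQuot.mkAlgHom F (racahRel F) (fD F)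

/-- `α = [A,D] + AC - BA` in the Racah algebra. -/
def alpha : Racah F := (A F * D F - D F * A F) + A F * C F - B F * A F
/-- `β = [B,D] + BA - CB` in the Racah algebra. -/
def beta : Racah F := (B F * D F - D F * B F) + B F * A F - C F * B F
/-- `γ = [C,D] + CB - AC` in the Racah algebra. -/
def gamma : Racah F := (C F * D F - D F * C F) + C F * B F - A F * C F
/-- `δ = A + B + C` in the Racah algebra. -/
def delta : Racah F := A F + B F + C F

/-- `Ω_A = D² + (BAC + CAB)/2 + A² + Bγ - Cβ - Aδ`. -/
def OmegaA : Racah F :=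
  D F ^ 2 + (2 : F)⁻¹ • (B F * A F * C F + C F * A F * B F) + A F ^ 2
    + B F * gamma F - C F * beta F - A F * delta F

/-- `Ω_B = D² + (CBA + ABC)/2 + B² + Cα - Aγ - Bδ`. -/
def OmegaB : Racah F :=
  D F ^ 2 + (2 : F)⁻¹ • (C F * B F * A F + A F * B F * C F) + B F ^ 2
    + C F * alpha F - A F * gamma F - B F * delta F

/-- `Ω_C = D² + (ACB + BCA)/2 + C² + Aβ - Bα - Cδ`. -/
def OmegaC : Racah F :=
  D F ^ 2 + (2 : F)⁻¹ • (A F * C F * B F + B F * C F * A F) + C F ^ 2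
    + A F * beta F - B F * alpha F - C F * delta F

-- the tensor algebra F[a,b,c] ⊗ U(sl2)
/-- The polynomial algebra `F[a,b,c]`. -/
abbrev P := MvPolynomial (Fin 3) F

/-- The tensor product algebra `F[a,b,c] ⊗ U(sl₂)`. -/
abbrev T := P F ⊗[F] U F

/-- The indeterminate `a`. -/
def pa : P F := MvPolynomial.X 0
/-- The indeterminate `b`. -/
def pb : P F := MvPolynomial.X 1
/-- The indeterminate `c`. -/
def pc : P F := MvPolynomial.X 2

/-- `A♮`. -/
def Anat : T F :=
  (pa F * (pa F + 1)) ⊗ₜ[F] (1 : U F) + (pb F - pc F - pa F) ⊗ₜ[F] ux F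
    + (pa F + pb F - pc F + 1) ⊗ₜ[F] uy F - (1 : P F) ⊗ₜ[F] (ux F * uy F)

/-- `B♮`. -/
def Bnat : T F :=
  (pb F * (pb F + 1)) ⊗ₜ[F] (1 : U F) + (pc F - pa F - pb F) ⊗ₜ[F] uy F
    + (pb F + pc F - pa F + 1) ⊗ₜ[F] uz F - (1 : P F) ⊗ₜ[F] (uy F * uz F)

/-- `C♮`. -/
def Cnat : T F :=
  (pc F * (pc F + 1)) ⊗ₜ[F] (1 : U F) + (pa F - pb F - pc F) ⊗ₜ[F] uz F
    + (pc F + pa F - pb F + 1) ⊗ₜ[F] ux F - (1 : P F) ⊗ₜ[F] (uz F * ux F)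

/-- `D♮`. -/
def Dnat : T F :=
  (1 : P F) ⊗ₜ[F] (uz F * uy F * ux F + uz F * ux F)
    + (pc F + pb F * (pc F + pa F - pb F)) ⊗ₜ[F] ux F
    + (pa F + pc F * (pa F + pb F - pc F)) ⊗ₜ[F] uy F
    + (pb F + pa F * (pb F + pc F - pa F)) ⊗ₜ[F] uz F
    + (pb F - pc F) ⊗ₜ[F] (ux F * uy F)
    + (pc F - pa F) ⊗ₜ[F] (uy F * uz F)
    + (pa F - pb F) ⊗ₜ[F] (uz F * ux F)

/-- `R = 2 ⊗ yν_x + 2(c+a-b+1) ⊗ ν_x`. -/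
def Rel : T F :=
  (2 : P F) ⊗ₜ[F] (uy F * nux F) + (2 * (pc F + pa F - pb F + 1)) ⊗ₜ[F] nux F

/-- `L = -2 ⊗ yν_z - 2(a-b-c-1) ⊗ ν_z`. -/
def Lel : T F :=
  -((2 : P F) ⊗ₜ[F] (uy F * nuz F)) - (2 * (pa F - pb F - pc F - 1)) ⊗ₜ[F] nuz F

/-- `θ = 1⊗y - b⊗1`. -/
def theta : T F := (1 : P F) ⊗ₜ[F] uy F - pb F ⊗ₜ[F] (1 : U F)

/-- `ϑ = 1⊗y + a⊗1`. -/
def vartheta : T F := (1 : P F) ⊗ₜ[F] uy F + pa F ⊗ₜ[F] (1 : U F)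

/-- `F[a,b,c] ⊗ U_n` as a subspace of `F[a,b,c] ⊗ U(sl₂)`. -/
def TU (n : ℤ) : Submodule F (T F) :=
  Submodule.span F {t : T F | ∃ (p : P F) (u : U F), u ∈ Usub F n ∧ t = p ⊗ₜ[F] u}

/-! The elements `A♮`, `B♮`, `C♮` are rotations of one expression in an equitable triple, and so
are the images of `α`, `β`, `γ`; it is therefore enough to compute the image of `α`.

Commutation with `y` grades the algebra: `-(x + y)` lowers the weight by one, `y + z` raises it by
one. For this grading `A♮` has weights `0, -1`, `B♮` has weights `0, 1` and `D♮` has weights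
`-1, 0, 1`. In `[A♮, D♮] + A♮C♮ - B♮A♮` the components of nonzero weight cancel, and the component
of weight zero is an identity between polynomials in `y` and the Casimir element, which commute.
-/

/-- Equitable triples of a ring: the relations between the equitable generators of `U(sl₂)`. -/
structure IsEquitable {S : Type*} [Ring S] (x y z : S) : Prop where
  xy : x * y - y * x = x + y
  yz : y * z - z * y = y + z
  zx : z * x - x * z = z + x

/-- The normalized Casimir element of an equitable triple, written so as to need no division
by `2` and to be visibly invariant under rotation. -/
def equitableCasimir {S : Type*} [Ring S] (x y z : S) : S :=
  x + y + z - x * y - y * z - z * x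

section EquitableTriple

variable {S : Type*} [Ring S] {x y z : S}

theorem equitableCasimir_rotate (x y z : S) :
    equitableCasimir y z x = equitableCasimir x y z := by
  simp only [equitableCasimir]
  abel

theorem map_equitableCasimir {S' : Type*} [Ring S'] (φ : S →+* S') (x y z : S) :
    φ (equitableCasimir x y z) = equitableCasimir (φ x) (φ y) (φ z) := by
  simp only [equitableCasimir, map_add, map_sub, map_mul]

namespace IsEquitable

theorem rotate (hxyz : IsEquitable x y z) : IsEquitable y z x :=
  ⟨hxyz.yz, hxyz.zx, hxyz.xy⟩

theorem map {S' : Type*} [Ring S'] (φ : S →+* S') (hxyz : IsEquitable x y z) :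
    IsEquitable (φ x) (φ y) (φ z) where
  xy := by simp only [← map_mul, ← map_sub, ← map_add, hxyz.xy]
  yz := by simp only [← map_mul, ← map_sub, ← map_add, hxyz.yz]
  zx := by simp only [← map_mul, ← map_sub, ← map_add, hxyz.zx]

theorem add_xy_mul_y (hxyz : IsEquitable x y z) :
    (x + y) * y = (y + 1) * (x + y) := by
  linear_combination (norm := noncomm_ring) hxyz.xy

theorem add_yz_mul_y (hxyz : IsEquitable x y z) :
    (y + z) * y = (y - 1) * (y + z) := by
  linear_combination (norm := noncomm_ring) -hxyz.yz

theorem add_yz_mul_add_xy (hxyz : IsEquitable x y z) :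
    (y + z) * (x + y) = y * (y - 1) - equitableCasimir x y z := by
  rw [equitableCasimir]
  linear_combination (norm := noncomm_ring) -hxyz.xy - hxyz.yz

theorem add_xy_mul_add_yz (hxyz : IsEquitable x y z) :
    (x + y) * (y + z) = y * (y + 1) - equitableCasimir x y z := by
  rw [equitableCasimir]
  linear_combination (norm := noncomm_ring) -hxyz.zx

theorem commute_casimir_y (hxyz : IsEquitable x y z) : Commute (equitableCasimir x y z) y := by
  rw [commute_iff_eq]
  linear_combination (norm := noncomm_ring) hxyz.add_yz_mul_add_xy * y
    - y * hxyz.add_yz_mul_add_xy - (y + z) * hxyz.add_xy_mul_y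
    - hxyz.add_yz_mul_y * (x + y)

theorem commute_casimir_x (hxyz : IsEquitable x y z) : Commute (equitableCasimir x y z) x := by
  have hx := hxyz.rotate.rotate.commute_casimir_y
  rwa [equitableCasimir_rotate, equitableCasimir_rotate] at hx

end IsEquitable

end EquitableTriple

section WeightComponents

variable {S : Type*} [Ring S] {θ ϑ ρ l n δ : S}

-- `hρn` is chosen so that the component of weight `-1` vanishes; it says how `n`, a polynomial in
-- the weight operator, changes under a unit shift.
theorem lowering_components_cancel (hθϑ : Commute θ ϑ) (hρθ : ρ * θ = (θ + 1) * ρ)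
    (hρϑ : ρ * ϑ = (ϑ + 1) * ρ)
    (hρn : ρ * n - n * ρ = (2 * θ * (ϑ + 1) + 2 * (ϑ + 1) ^ 2 + 2 * θ ^ 2) * ρ - ρ * δ) :
    ϑ * (ϑ + 1) * (θ * ρ) - θ * ρ * (ϑ * (ϑ + 1)) + (ρ * n - n * ρ) + ρ * δ
      - (ϑ * (ϑ + 1) + θ * (θ - 1)) * ρ - ρ * (ϑ * (ϑ + 1) + θ * (θ - 1)) = 0 := by
  have hshift_ϑ : ρ * (ϑ * (ϑ + 1)) = (ϑ + 1) * (ϑ + 2) * ρ := by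
    linear_combination (norm := noncomm_ring) hρϑ * (ϑ + 1) + (ϑ + 1) * hρϑ
  have hshift_θ : ρ * (θ * (θ - 1)) = (θ + 1) * θ * ρ := by
    linear_combination (norm := noncomm_ring) hρθ * (θ - 1) + (θ + 1) * hρθ
  have hcomm : ϑ * (ϑ + 1) * θ = θ * (ϑ * (ϑ + 1)) :=
    (hθϑ.mul_right (hθϑ.add_right (Commute.one_right θ))).eq.symm
  linear_combination (norm := noncomm_ring) hρn + hcomm * ρ - (θ + 1) * hshift_ϑ - hshift_θ

theorem raising_components_cancel (hlϑ : l * ϑ = (ϑ - 1) * l) :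
    ϑ * (ϑ + 1) * (ϑ * l) - ϑ * l * (ϑ * (ϑ + 1)) - ϑ * (ϑ + 1) * l - l * (ϑ * (ϑ + 1)) = 0 := by
  have hshift : l * (ϑ * (ϑ + 1)) = (ϑ - 1) * ϑ * l := by
    linear_combination (norm := noncomm_ring) hlϑ * (ϑ + 1) + (ϑ - 1) * hlϑ
  linear_combination (norm := noncomm_ring) -(ϑ + 1) * hshift

theorem alpha_eq_weight_zero_component (hθϑ : Commute θ ϑ) (hnϑ : Commute n ϑ)
    (hρθ : ρ * θ = (θ + 1) * ρ) (hρϑ : ρ * ϑ = (ϑ + 1) * ρ) (hlϑ : l * ϑ = (ϑ - 1) * l)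
    (hρn : ρ * n - n * ρ = (2 * θ * (ϑ + 1) + 2 * (ϑ + 1) ^ 2 + 2 * θ ^ 2) * ρ - ρ * δ)
    {A B C D : S} (hA : A = ϑ * (ϑ + 1) + ρ) (hB : B = θ * (θ - 1) + l)
    (hC : C = δ - A - B) (hD : D = θ * ρ + ϑ * l + n) :
    A * D - D * A + A * C - B * A =
      ϑ * (ρ * l) - (ϑ + 1) * (l * ρ)
        + ϑ * (ϑ + 1) * (δ - ϑ * (ϑ + 1) - 2 * θ * (θ - 1)) := by
  have weight_neg_two : ρ * (θ * ρ) - θ * ρ * ρ - ρ ^ 2 = 0 := by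
    linear_combination (norm := noncomm_ring) hρθ * ρ
  have weight_neg_one := lowering_components_cancel hθϑ hρθ hρϑ hρn
  have weight_one := raising_components_cancel hlϑ
  have hϑ : ∀ {w : S}, Commute w ϑ → Commute w (ϑ * (ϑ + 1)) := fun h ↦
    h.mul_right (h.add_right (Commute.one_right _))
  have hn : n * (ϑ * (ϑ + 1)) = ϑ * (ϑ + 1) * n := (hϑ hnϑ).eq
  have hθ : θ * (θ - 1) * (ϑ * (ϑ + 1)) = ϑ * (ϑ + 1) * (θ * (θ - 1)) :=
    ((hϑ hθϑ).mul_left ((hϑ hθϑ).sub_left (Commute.one_left _))).eq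
  subst hC hA hB hD
  linear_combination (norm := noncomm_ring)
    weight_neg_two + weight_neg_one + weight_one + hρϑ * l - hn - hθ

end WeightComponents

section RacahElements

variable {R S : Type*} [CommRing R] [Ring S] [Algebra R S] {x y z : S}

/-- The element `A♮` of two consecutive members of an equitable triple; `B♮` and `C♮` are
`racahA b c a y z` and `racahA c a b z x`. -/
def racahA (a b c : R) (x y : S) : S :=
  (a * (a + 1)) • (1 : S) + (b - c - a) • x + (a + b - c + 1) • y - x * y

/-- The element `D♮` of an equitable triple with parameters `a, b, c`. -/
def racahD (a b c : R) (x y z : S) : S :=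
  (z * y * x + z * x) + (c + b * (c + a - b)) • x + (a + c * (a + b - c)) • y
    + (b + a * (b + c - a)) • z + (b - c) • (x * y) + (c - a) • (y * z) + (a - b) • (z * x)

/-- The component of weight `-1` of `A♮`, called `R` in the paper. -/
def lowerPart (a b c : R) (x y : S) : S :=
  -(x + y) * (y + (c + a - b) • (1 : S))

/-- The component of weight `1` of `B♮`, called `L` in the paper. -/
def raisePart (a b c : R) (y z : S) : S :=
  -(y + (a - b - c - 1) • (1 : S)) * (y + z)

/-- The component of weight `0` of `D♮`. -/
def diagPart (a b c : R) (x y z : S) : S :=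
  (y + (a - b) • (1 : S)) * (y * (y + y + (a - b) • (1 : S)) - equitableCasimir x y z)
    - (c * (c + 1)) • y

theorem racahA_cyclic_sum (a b c : R) (x y z : S) :
    racahA a b c x y + racahA b c a y z + racahA c a b z x =
      equitableCasimir x y z + (a * (a + 1)) • (1 : S) + (b * (b + 1)) • (1 : S)
        + (c * (c + 1)) • (1 : S) := by
  simp only [racahA, equitableCasimir]
  module

theorem racahD_rotate (a b c : R) (hxyz : IsEquitable x y z) :
    racahD b c a y z x = racahD a b c x y z := by
  have hcubic : x * z * y + x * y = z * y * x + z * x := by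
    linear_combination (norm := noncomm_ring) -hxyz.zx * y + z * hxyz.xy
  simp only [racahD, hcubic]
  abel

theorem racahA_eq_add_lowerPart (a b c : R) (x y : S) :
    racahA a b c x y = (y + a • 1) * (y + a • 1 + 1) + lowerPart a b c x y := by
  simp only [racahA, lowerPart, mul_add, add_mul, neg_mul, mul_one, one_mul, smul_mul_assoc,
    mul_smul_comm]
  module

theorem racahA_eq_add_raisePart (a b c : R) (y z : S) :
    racahA b c a y z = (y - b • 1) * (y - b • 1 - 1) + raisePart a b c y z := by
  simp only [racahA, raisePart, mul_add, add_mul, mul_sub, sub_mul, neg_mul, mul_one, one_mul,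
    smul_mul_assoc, mul_smul_comm]
  module

theorem racahD_eq_sum_weight_components (a b c : R) (hxyz : IsEquitable x y z) :
    racahD a b c x y z =
      (y - b • 1) * lowerPart a b c x y + (y + a • 1) * raisePart a b c y z
        + diagPart a b c x y z := by
  simp only [racahD, lowerPart, raisePart, diagPart, equitableCasimir]
  linear_combination (norm := skip) -hxyz.yz * x - (c + a - b) • hxyz.xy
  simp only [mul_add, add_mul, mul_sub, sub_mul, neg_mul, mul_neg, mul_one, one_mul, mul_assoc,
    smul_mul_assoc, mul_smul_comm]
  module

theorem lowerPart_mul_y (a b c : R) (hxyz : IsEquitable x y z) :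
    lowerPart a b c x y * y = (y + 1) * lowerPart a b c x y := by
  have hcomm : Commute (y + (c + a - b) • (1 : S)) y :=
    (Commute.refl y).add_left ((Commute.one_left y).smul_left _)
  rw [lowerPart, mul_assoc, hcomm.eq, ← mul_assoc, neg_mul, hxyz.add_xy_mul_y, ← mul_neg,
    mul_assoc]

theorem raisePart_mul_y (a b c : R) (hxyz : IsEquitable x y z) :
    raisePart a b c y z * y = (y - 1) * raisePart a b c y z := by
  have hcomm : Commute (y + (a - b - c - 1) • (1 : S)) (y - 1) :=
    ((Commute.refl y).add_left ((Commute.one_left y).smul_left _)).sub_right (Commute.one_right _)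
  rw [raisePart, mul_assoc, hxyz.add_yz_mul_y, ← mul_assoc, neg_mul, hcomm.eq, ← mul_neg,
    mul_assoc]

theorem raisePart_mul_lowerPart (a b c : R) (hxyz : IsEquitable x y z) :
    raisePart a b c y z * lowerPart a b c x y =
      (y + (a - b - c - 1) • (1 : S)) * (y * (y - 1) - equitableCasimir x y z)
        * (y + (c + a - b) • (1 : S)) := by
  rw [← hxyz.add_yz_mul_add_xy, raisePart, lowerPart]
  noncomm_ring

theorem lowerPart_mul_raisePart (a b c : R) (hxyz : IsEquitable x y z) :
    lowerPart a b c x y * raisePart a b c y z =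
      (y + (c + a - b + 1) • (1 : S)) * (y + (a - b - c) • (1 : S))
        * (y * (y + 1) - equitableCasimir x y z) := by
  have hshift (r : R) : (x + y) * (y + r • (1 : S)) = (y + (r + 1) • (1 : S)) * (x + y) := by
    linear_combination (norm := skip) hxyz.add_xy_mul_y
    simp only [mul_add, add_mul, mul_one, one_mul, smul_mul_assoc, mul_smul_comm]
    module
  rw [← hxyz.add_xy_mul_add_yz, lowerPart, raisePart]
  calc -(x + y) * (y + (c + a - b) • (1 : S)) * (-(y + (a - b - c - 1) • (1 : S)) * (y + z))
    _ = (x + y) * (y + (c + a - b) • (1 : S)) * (y + (a - b - c - 1) • (1 : S)) * (y + z) := by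
        simp only [neg_mul, mul_neg, neg_neg, mul_assoc]
    _ = (y + (c + a - b + 1) • (1 : S)) * ((x + y) * (y + (a - b - c - 1) • (1 : S)))
          * (y + z) := by rw [hshift, mul_assoc (y + _)]
    _ = (y + (c + a - b + 1) • (1 : S)) * (y + (a - b - c) • (1 : S))
          * ((x + y) * (y + z)) := by rw [hshift, sub_add_cancel]; simp only [mul_assoc]

theorem commute_diagPart (a b c : R) (hxyz : IsEquitable x y z) :
    Commute (diagPart a b c x y z) y := by
  have hy : Commute y y := Commute.refl y
  have hr (r : R) : Commute (r • (1 : S)) y := (Commute.one_left y).smul_left r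
  exact ((hy.add_left (hr _)).mul_left
    ((hy.mul_left ((hy.add_left hy).add_left (hr _))).sub_left hxyz.commute_casimir_y)).sub_left
    (hy.smul_left _)

theorem commute_casimir_lowerPart (a b c : R) (hxyz : IsEquitable x y z) :
    Commute (equitableCasimir x y z) (lowerPart a b c x y) :=
  (hxyz.commute_casimir_x.add_right hxyz.commute_casimir_y).neg_right.mul_right
    (hxyz.commute_casimir_y.add_right ((Commute.one_right _).smul_right _))

theorem lowerPart_diagPart_commutator (a b c : R) (hxyz : IsEquitable x y z) :
    lowerPart a b c x y * diagPart a b c x y z - diagPart a b c x y z * lowerPart a b c x y =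
      (2 * (y - b • 1) * (y + a • 1 + 1) + 2 * (y + a • 1 + 1) ^ 2 + 2 * (y - b • 1) ^ 2)
          * lowerPart a b c x y
        - lowerPart a b c x y * (equitableCasimir x y z + (a * (a + 1)) • (1 : S)
          + (b * (b + 1)) • (1 : S) + (c * (c + 1)) • (1 : S)) := by
  have hΛ := (commute_casimir_lowerPart a b c hxyz).eq
  have hy := lowerPart_mul_y a b c hxyz
  rw [diagPart]
  generalize lowerPart a b c x y = ρ at *
  generalize equitableCasimir x y z = Λ at *
  have hy' (w : S) : ρ * (y * w) = y * (ρ * w) + ρ * w := by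
    rw [← mul_assoc, hy, add_mul, add_mul, one_mul, mul_assoc]
  rw [add_mul, one_mul] at hy
  simp only [← one_add_one_eq_two (R := S), pow_two, mul_add, add_mul, mul_sub, sub_mul,
    mul_one, one_mul, mul_assoc, smul_mul_assoc, mul_smul_comm, hy, hy', ← hΛ]
  module

theorem weight_zero_component_eq (a b c : R) {Λ : S} (hΛ : Commute Λ y) :
    (y + a • 1) * ((y + (c + a - b + 1) • (1 : S)) * (y + (a - b - c) • (1 : S))
          * (y * (y + 1) - Λ))
        - (y + a • 1 + 1) * ((y + (a - b - c - 1) • (1 : S)) * (y * (y - 1) - Λ)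
          * (y + (c + a - b) • (1 : S)))
        + (y + a • 1) * (y + a • 1 + 1) * (Λ + (a * (a + 1)) • (1 : S) + (b * (b + 1)) • (1 : S)
          + (c * (c + 1)) • (1 : S) - (y + a • 1) * (y + a • 1 + 1)
          - 2 * (y - b • 1) * (y - b • 1 - 1)) =
      (Λ - (a * (a + 1)) • (1 : S)) * ((b * (b + 1)) • (1 : S) - (c * (c + 1)) • (1 : S)) := by
  simp only [← one_add_one_eq_two (R := S), mul_add, add_mul, mul_sub, sub_mul, mul_one, one_mul,
    mul_assoc, smul_mul_assoc, mul_smul_comm, hΛ.eq]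
  module

theorem racahAlpha_eq (a b c : R) (hxyz : IsEquitable x y z) :
    racahA a b c x y * racahD a b c x y z - racahD a b c x y z * racahA a b c x y
        + racahA a b c x y * racahA c a b z x - racahA b c a y z * racahA a b c x y =
      (equitableCasimir x y z - (a * (a + 1)) • (1 : S))
        * ((b * (b + 1)) • (1 : S) - (c * (c + 1)) • (1 : S)) := by
  have hC : racahA c a b z x = (equitableCasimir x y z + (a * (a + 1)) • (1 : S)
      + (b * (b + 1)) • (1 : S) + (c * (c + 1)) • (1 : S)) - racahA a b c x y
      - racahA b c a y z := by
    rw [← racahA_cyclic_sum]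
    abel
  have hr (r : R) (w : S) : Commute w (r • (1 : S)) := (Commute.one_right w).smul_right r
  have hθϑ : Commute (y - b • (1 : S)) (y + a • 1) :=
    ((Commute.refl y).sub_left (hr b y).symm).add_right (hr a _)
  have hnϑ := (commute_diagPart a b c hxyz).add_right (hr a _)
  have hρ := lowerPart_mul_y a b c hxyz
  have hl := raisePart_mul_y a b c hxyz
  have hρθ : lowerPart a b c x y * (y - b • 1) = (y - b • 1 + 1) * lowerPart a b c x y := by
    linear_combination (norm := noncomm_ring) hρ - (hr b (lowerPart a b c x y)).eq
  have hρϑ : lowerPart a b c x y * (y + a • 1) = (y + a • 1 + 1) * lowerPart a b c x y := by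
    linear_combination (norm := noncomm_ring) hρ + (hr a (lowerPart a b c x y)).eq
  have hlϑ : raisePart a b c y z * (y + a • 1) = (y + a • 1 - 1) * raisePart a b c y z := by
    linear_combination (norm := noncomm_ring) hl + (hr a (raisePart a b c y z)).eq
  rw [alpha_eq_weight_zero_component hθϑ hnϑ hρθ hρϑ hlϑ
    (lowerPart_diagPart_commutator a b c hxyz) (racahA_eq_add_lowerPart a b c x y)
    (racahA_eq_add_raisePart a b c y z) hC (racahD_eq_sum_weight_components a b c hxyz),
    lowerPart_mul_raisePart a b c hxyz, raisePart_mul_lowerPart a b c hxyz,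
    weight_zero_component_eq a b c hxyz.commute_casimir_y]

end RacahElements

section Sl2Relations

variable {K S : Type*} [Field K] [Ring S] [Algebra K S] {e f h : S}

theorem isEquitable_of_sl2 (hchar : (2 : K) ≠ 0) (he : h * e - e * h = 2 * e)
    (hf : h * f - f * h = -(2 * f)) (hef : e * f - f * e = h) :
    IsEquitable (-f - (2 : K)⁻¹ • h) ((2 : K)⁻¹ • h) (e - (2 : K)⁻¹ • h) := by
  obtain ⟨y, rfl⟩ : ∃ y : S, h = (2 : K) • y := ⟨(2 : K)⁻¹ • h, (smul_inv_smul₀ hchar h).symm⟩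
  have hye : y * e - e * y = e := smul_right_injective S hchar <| by
    simpa only [smul_mul_assoc, mul_smul_comm, ← smul_sub, two_smul K e, two_mul] using he
  have hyf : y * f - f * y = -f := smul_right_injective S hchar <| by
    simpa only [smul_mul_assoc, mul_smul_comm, ← smul_sub, smul_neg, two_smul K f, two_mul]
      using hf
  rw [two_smul] at hef
  rw [inv_smul_smul₀ hchar]
  constructor
  · linear_combination (norm := noncomm_ring) hyf
  · linear_combination (norm := noncomm_ring) hye
  · linear_combination (norm := noncomm_ring) -hef + hyf + hye

theorem casimir_eq_equitableCasimir (hchar : (2 : K) ≠ 0) (he : h * e - e * h = 2 * e)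
    (hf : h * f - f * h = -(2 * f)) (hef : e * f - f * e = h) :
    e * f + (4 : K)⁻¹ • (h * (h - 2)) =
      equitableCasimir (-f - (2 : K)⁻¹ • h) ((2 : K)⁻¹ • h) (e - (2 : K)⁻¹ • h) := by
  have hcasimir := (isEquitable_of_sl2 hchar he hf hef).add_yz_mul_add_xy
  rw [add_sub_cancel, sub_add_cancel] at hcasimir
  have hquarter : (4 : K)⁻¹ • (h * (h - 2)) = (2 : K)⁻¹ • h * ((2 : K)⁻¹ • h - 1) := by
    have hone : (1 : S) = (2 : K)⁻¹ • 2 := by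
      rw [← one_add_one_eq_two (R := S), ← two_smul K (1 : S), inv_smul_smul₀ hchar]
    have hfour : (4 : K)⁻¹ = 2⁻¹ * 2⁻¹ := by rw [← mul_inv]; norm_num
    rw [hone, ← smul_sub, smul_mul_smul_comm, hfour]
  rw [hquarter]
  linear_combination (norm := noncomm_ring) -hcasimir

end Sl2Relations

section EnvelopingAlgebra

theorem h_mul_e_sub : h F * e F - e F * h F = 2 * e F := by
  simpa only [e, f, h, map_sub, map_mul, map_ofNat] using
    RingQuot.mkAlgHom_rel F (slRel.he (F := F))

theorem h_mul_f_sub : h F * f F - f F * h F = -(2 * f F) := by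
  simpa only [e, f, h, map_sub, map_mul, map_neg, map_ofNat] using
    RingQuot.mkAlgHom_rel F (slRel.hf (F := F))

theorem e_mul_f_sub : e F * f F - f F * e F = h F := by
  simpa only [e, f, h, map_sub, map_mul] using RingQuot.mkAlgHom_rel F (slRel.ef (F := F))

variable {F}

theorem isEquitable_ux_uy_uz (hchar : (2 : F) ≠ 0) : IsEquitable (ux F) (uy F) (uz F) :=
  isEquitable_of_sl2 hchar (h_mul_e_sub F) (h_mul_f_sub F) (e_mul_f_sub F)

theorem Lam_eq_equitableCasimir (hchar : (2 : F) ≠ 0) :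
    Lam F = equitableCasimir (ux F) (uy F) (uz F) :=
  casimir_eq_equitableCasimir hchar (h_mul_e_sub F) (h_mul_f_sub F) (e_mul_f_sub F)

end EnvelopingAlgebra

section TensorAlgebra

theorem isEquitable_one_tmul (hchar : (2 : F) ≠ 0) :
    IsEquitable ((1 : P F) ⊗ₜ[F] ux F) ((1 : P F) ⊗ₜ[F] uy F) ((1 : P F) ⊗ₜ[F] uz F) :=
  (isEquitable_ux_uy_uz hchar).map
    (Algebra.TensorProduct.includeRight : U F →ₐ[F] T F).toRingHom

theorem one_tmul_Lam (hchar : (2 : F) ≠ 0) :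
    (1 : P F) ⊗ₜ[F] Lam F = equitableCasimir ((1 : P F) ⊗ₜ[F] ux F) ((1 : P F) ⊗ₜ[F] uy F)
      ((1 : P F) ⊗ₜ[F] uz F) := by
  rw [Lam_eq_equitableCasimir hchar]
  exact map_equitableCasimir (Algebra.TensorProduct.includeRight : U F →ₐ[F] T F).toRingHom _ _ _

variable {F}

theorem tmul_eq_smul (p : P F) (u : U F) : p ⊗ₜ[F] u = p • ((1 : P F) ⊗ₜ[F] u) := by
  rw [TensorProduct.smul_tmul', smul_eq_mul, mul_one]

theorem tmul_one_eq_smul_one (p : P F) : p ⊗ₜ[F] (1 : U F) = p • (1 : T F) :=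
  tmul_eq_smul p 1

theorem one_tmul_mul (u v : U F) :
    (1 : P F) ⊗ₜ[F] (u * v) = ((1 : P F) ⊗ₜ[F] u) * ((1 : P F) ⊗ₜ[F] v) :=
  map_mul (Algebra.TensorProduct.includeRight : U F →ₐ[F] T F) u v

theorem racahA_one_tmul (a b c : P F) (u v : U F) :
    racahA a b c ((1 : P F) ⊗ₜ[F] u) ((1 : P F) ⊗ₜ[F] v) =
      (a * (a + 1)) ⊗ₜ[F] (1 : U F) + (b - c - a) ⊗ₜ[F] u + (a + b - c + 1) ⊗ₜ[F] v
        - (1 : P F) ⊗ₜ[F] (u * v) := by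
  simp only [racahA, ← tmul_one_eq_smul_one, ← tmul_eq_smul, ← one_tmul_mul]

theorem racahD_one_tmul (a b c : P F) (u v w : U F) :
    racahD a b c ((1 : P F) ⊗ₜ[F] u) ((1 : P F) ⊗ₜ[F] v) ((1 : P F) ⊗ₜ[F] w) =
      (1 : P F) ⊗ₜ[F] (w * v * u + w * u) + (c + b * (c + a - b)) ⊗ₜ[F] u
        + (a + c * (a + b - c)) ⊗ₜ[F] v + (b + a * (b + c - a)) ⊗ₜ[F] w
        + (b - c) ⊗ₜ[F] (u * v) + (c - a) ⊗ₜ[F] (v * w) + (a - b) ⊗ₜ[F] (w * u) := by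
  simp only [racahD, ← tmul_eq_smul, ← one_tmul_mul, TensorProduct.tmul_add]

end TensorAlgebra

theorem statement1 (hchar : (2 : F) ≠ 0) (φ : Racah F →ₐ[F] T F)
    (hA : φ (A F) = Anat F) (hB : φ (B F) = Bnat F)
    (hC : φ (C F) = Cnat F) (hD : φ (D F) = Dnat F) :
    φ (alpha F) =
      ((1 : P F) ⊗ₜ[F] Lam F - (pa F * (pa F + 1)) ⊗ₜ[F] (1 : U F)) *
        ((pb F * (pb F + 1)) ⊗ₜ[F] (1 : U F) - (pc F * (pc F + 1)) ⊗ₜ[F] (1 : U F)) ∧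
    φ (beta F) =
      ((1 : P F) ⊗ₜ[F] Lam F - (pb F * (pb F + 1)) ⊗ₜ[F] (1 : U F)) *
        ((pc F * (pc F + 1)) ⊗ₜ[F] (1 : U F) - (pa F * (pa F + 1)) ⊗ₜ[F] (1 : U F)) ∧
    φ (gamma F) =
      ((1 : P F) ⊗ₜ[F] Lam F - (pc F * (pc F + 1)) ⊗ₜ[F] (1 : U F)) *
        ((pa F * (pa F + 1)) ⊗ₜ[F] (1 : U F) - (pb F * (pb F + 1)) ⊗ₜ[F] (1 : U F)) ∧
    φ (delta F) =
      (1 : P F) ⊗ₜ[F] Lam F + (pa F * (pa F + 1)) ⊗ₜ[F] (1 : U F)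
        + (pb F * (pb F + 1)) ⊗ₜ[F] (1 : U F) + (pc F * (pc F + 1)) ⊗ₜ[F] (1 : U F) := by
  have hxyz := isEquitable_one_tmul F hchar
  have hα := racahAlpha_eq (pa F) (pb F) (pc F) hxyz
  have hβ := racahAlpha_eq (pb F) (pc F) (pa F) hxyz.rotate
  have hγ := racahAlpha_eq (pc F) (pa F) (pb F) hxyz.rotate.rotate
  have hδ := racahA_cyclic_sum (pa F) (pb F) (pc F) ((1 : P F) ⊗ₜ[F] ux F)
    ((1 : P F) ⊗ₜ[F] uy F) ((1 : P F) ⊗ₜ[F] uz F)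
  rw [racahD_rotate _ _ _ hxyz, equitableCasimir_rotate] at hβ
  rw [racahD_rotate _ _ _ hxyz.rotate, racahD_rotate _ _ _ hxyz, equitableCasimir_rotate,
    equitableCasimir_rotate] at hγ
  simp only [racahA_one_tmul, racahD_one_tmul, ← one_tmul_Lam F hchar,
    ← tmul_one_eq_smul_one] at hα hβ hγ hδ
  simp only [alpha, beta, gamma, delta, map_add, map_sub, map_mul, hA, hB, hC, hD]
  exact ⟨hα, hβ, hγ, hδ⟩

end RacahPaper
end
end

section
/- The F-algebra homomorphism ♮ : ℜ → F[a,b,c] ⊗ U(sl₂) is injective. -/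
open scoped TensorProduct

noncomputable section

namespace RacahPaper

variable (F : Type) [Field F]

/-!
Straightening products in `A`, `B`, `D` shows that `ℜ` is spanned by the monomials `A^i D^ε B^k`
with `ε ∈ {0, 1}` over the subalgebra generated by the central elements `α, β, δ, Ω_A`.

On the other side, `U(sl₂)` acts on `ℤ → K` with weights `2(y + n)` and Casimir value `s`. Once
`a, b, c` are specialized to scalars as well, the images under `♮` of `α, β, δ, Ω_A` act by
explicit polynomials in `a(a+1), b(b+1), c(c+1), s`. For indeterminate `a, b, c, s` these four
polynomials are algebraically independent, because `a, b, c, s` are algebraic over them. If `y` is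
a further indeterminate, then `A^i D^ε B^k` sends the vector supported at `0` to one whose last
nonzero entry is at `k + ε` and has degree `k + 2ε + 2i` in `y`. These two numbers determine
`(i, ε, k)`, so the images of the monomials are linearly independent over `F[a, b, c, s]`, and every
coefficient of an element of the kernel of `♮` vanishes.
-/

section LinearIndependence

theorem linearIndependent_of_injective_top {R M ι κ : Type*} [Ring R] [NoZeroDivisors R]
    [AddCommGroup M] [Module R M] [LinearOrder κ] (coord : κ → M →ₗ[R] R) {v : ι → M} {top : ι → κ}
    (htop : Function.Injective top) (hne : ∀ i, coord (top i) (v i) ≠ 0)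
    (hzero : ∀ i k, top i < k → coord k (v i) = 0) : LinearIndependent R v := by
  classical
  rw [linearIndependent_iff']
  intro s c hsum
  by_contra! hc
  obtain ⟨i₀, hi₀, hci₀⟩ := hc
  obtain ⟨j, hj, hmax⟩ := Finset.exists_max_image (s.filter (c · ≠ 0)) top
    ⟨i₀, Finset.mem_filter.2 ⟨hi₀, hci₀⟩⟩
  obtain ⟨hjs, hcj⟩ := Finset.mem_filter.1 hj
  have hvanish : ∀ i ∈ s, i ≠ j → c i * coord (top j) (v i) = 0 := by
    intro i hi hij
    by_cases hci : c i = 0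
    · rw [hci, zero_mul]
    · have hle : top i ≤ top j := hmax i (Finset.mem_filter.2 ⟨hi, hci⟩)
      rw [hzero i _ (lt_of_le_of_ne hle (htop.ne hij)), mul_zero]
  have hcoord : c j * coord (top j) (v j) = 0 := by
    rw [← Finset.sum_eq_single_of_mem j hjs hvanish]
    simpa only [map_sum, map_smul, smul_eq_mul, map_zero] using congrArg (coord (top j)) hsum
  exact mul_ne_zero hcj (hne j) hcoord

theorem injective_of_span_eq_top_of_linearIndependent {Z R N M ι : Type*} [Semiring Z] [Ring R]
    [AddCommGroup N] [Module Z N] [AddCommGroup M] [Module R M] {σ : Z →+* R}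
    (hσ : Function.Injective σ) (f : N →ₛₗ[σ] M) {v : ι → N}
    (hv : Submodule.span Z (Set.range v) = ⊤) (hli : LinearIndependent R (f ∘ v)) :
    Function.Injective f := by
  refine (injective_iff_map_eq_zero f).2 fun x hx ↦ ?_
  have hmem : x ∈ Submodule.span Z (Set.range v) := hv ▸ Submodule.mem_top
  obtain ⟨l, rfl⟩ := Finsupp.mem_span_range_iff_exists_finsupp.1 hmem
  have hcomb : Finsupp.linearCombination R (f ∘ v) (l.mapRange σ (map_zero σ)) = 0 := by
    rw [Finsupp.linearCombination_apply,
      Finsupp.sum_mapRange_index fun i ↦ zero_smul R ((f ∘ v) i), ← hx, map_finsuppSum]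
    simp only [Function.comp_apply, map_smulₛₗ]
  have hl : l = 0 := Finsupp.mapRange_injective σ (map_zero σ) hσ <| by
    rw [linearIndependent_iff.1 hli _ hcomb, Finsupp.mapRange_zero]
  rw [hl, Finsupp.sum_zero_index]

end LinearIndependence

section CentralScalar

/-- The scalars by which `α, β, δ, Ω_A` act on a representation of `F[a,b,c] ⊗ U(sl₂)` in which
the Casimir element acts by `s`, written in terms of `p = a(a+1)`, `q = b(b+1)`, `r = c(c+1)`. -/
def centralScalar {R : Type*} [CommRing R] (p q r s : R) : Fin 4 → R :=
  ![(q - r) * (s - p), (r - p) * (s - q), p + q + r + s,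
    (p * s - q * r) * (p + s - q - r) - (p + s) * (q + r)]

variable {G R : Type*} [CommRing G] [CommRing R] [Algebra G R]

/-- The cubic comes from eliminating `p + s`, `q + r`, `ps`, `qr` from
`((q - r)(s - p))² = ((q + r)² - 4qr)((p + s)² - 4ps)`. -/
theorem isIntegral_sq_sub_of_centralScalar {p q r s : R}
    (h : ∀ i, centralScalar p q r s i ∈ (algebraMap G R).range) :
    IsIntegral G ((p + s - q - r) ^ 2) := by
  obtain ⟨α, hα⟩ := h 0
  obtain ⟨β, hβ⟩ := h 1
  obtain ⟨δ, hδ⟩ := h 2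
  obtain ⟨Ω, hΩ⟩ := h 3
  let κ := 2 * β + α
  let m := δ + 1
  let w := 4 * Ω + δ ^ 2
  let cubic : Cubic G := ⟨1, 4 * κ - m ^ 2, 4 * κ ^ 2 + 2 * m * w - 4 * α ^ 2, -w ^ 2⟩
  refine ⟨cubic.toPoly, Cubic.monic_of_a_eq_one rfl, ?_⟩
  simp only [cubic, Cubic.toPoly, Polynomial.eval₂_add, Polynomial.eval₂_mul, Polynomial.eval₂_C,
    Polynomial.eval₂_X_pow, Polynomial.eval₂_X]
  simp only [κ, m, w, map_add, map_sub, map_mul, map_pow, map_neg, map_one, map_ofNat,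
    hα, hβ, hδ, hΩ]
  simp only [centralScalar, Matrix.cons_val]
  ring

variable [IsDomain R]

theorem isAlgebraic_of_mul_add_one {x : R} (hx : IsAlgebraic G (x * (x + 1))) :
    IsAlgebraic G x := by
  have : Nontrivial G := (algebraMap G R).domain_nontrivial
  have hmonic : (Polynomial.X * (Polynomial.X + 1) : Polynomial G).Monic := by monicity!
  have hdeg : (Polynomial.X * (Polynomial.X + 1) : Polynomial G).natDegree = 2 := by
    compute_degree!
  refine IsAlgebraic.of_aeval (Polynomial.X * (Polynomial.X + 1)) (by simp [hdeg]) ?_ ?_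
  · rw [hmonic.leadingCoeff]
    exact one_mem _
  · simpa using hx

variable [IsDomain G]

theorem isAlgebraic_of_two_mul [NeZero (2 : R)] {x : R} (hx : IsAlgebraic G (2 * x)) :
    IsAlgebraic G x :=
  .of_mul (mem_nonZeroDivisors_of_ne_zero two_ne_zero) (isAlgebraic_natCast 2)
    (by simpa only [Nat.cast_ofNat, mul_comm x] using hx)

theorem isAlgebraic_of_add_of_sub [NeZero (2 : R)] {x y : R} (hadd : IsAlgebraic G (x + y))
    (hsub : IsAlgebraic G (x - y)) : IsAlgebraic G x ∧ IsAlgebraic G y := by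
  have hx : 2 * x = x + y + (x - y) := by ring
  have hy : 2 * y = x + y - (x - y) := by ring
  exact ⟨isAlgebraic_of_two_mul (hx ▸ hadd.add hsub), isAlgebraic_of_two_mul (hy ▸ hadd.sub hsub)⟩

theorem isAlgebraic_of_add_of_mul [NeZero (2 : R)] {x y : R} (hadd : IsAlgebraic G (x + y))
    (hmul : IsAlgebraic G (x * y)) : IsAlgebraic G x ∧ IsAlgebraic G y := by
  have hdisc : (x - y) ^ 2 = (x + y) ^ 2 - (4 : ℕ) * (x * y) := by push_cast; ring
  have hsq : IsAlgebraic G ((x - y) ^ 2) :=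
    hdisc ▸ (hadd.pow 2).sub ((isAlgebraic_natCast 4).mul hmul)
  exact isAlgebraic_of_add_of_sub hadd (hsq.of_pow two_pos)

theorem isAlgebraic_of_centralScalar [NeZero (2 : R)] {p q r s : R}
    (hd : p + s - q - r ≠ 0) (h : ∀ i, centralScalar p q r s i ∈ (algebraMap G R).range) :
    IsAlgebraic G p ∧ IsAlgebraic G q ∧ IsAlgebraic G r ∧ IsAlgebraic G s := by
  have halg (i : Fin 4) : IsAlgebraic G (centralScalar p q r s i) := by
    obtain ⟨g, hg⟩ := h i
    exact hg ▸ isAlgebraic_algebraMap g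
  have hα : IsAlgebraic G ((q - r) * (s - p)) := halg 0
  have hβ : IsAlgebraic G ((r - p) * (s - q)) := halg 1
  have hδ : IsAlgebraic G (p + q + r + s) := halg 2
  have hΩ : IsAlgebraic G ((p * s - q * r) * (p + s - q - r) - (p + s) * (q + r)) := halg 3
  have hdiff : IsAlgebraic G (p + s - q - r) :=
    (isIntegral_sq_sub_of_centralScalar h).isAlgebraic.of_pow two_pos
  obtain ⟨hps_add, hqr_add⟩ : IsAlgebraic G (p + s) ∧ IsAlgebraic G (q + r) := by
    apply isAlgebraic_of_add_of_sub
    · convert hδ using 1; ring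
    · convert hdiff using 1; ring
  have hprod := hps_add.mul hqr_add
  have hsum_mul : IsAlgebraic G (p * s + q * r) := by
    apply isAlgebraic_of_two_mul
    convert (hprod.sub ((isAlgebraic_natCast 2).mul hβ)).sub hα using 1
    push_cast
    ring
  have hdiff_mul : IsAlgebraic G (p * s - q * r) := by
    refine .of_mul (mem_nonZeroDivisors_of_ne_zero hd) hdiff ?_
    convert hΩ.add hprod using 1
    ring
  obtain ⟨hps_mul, hqr_mul⟩ := isAlgebraic_of_add_of_sub hsum_mul hdiff_mul
  obtain ⟨hp, hs⟩ := isAlgebraic_of_add_of_mul hps_add hps_mul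
  obtain ⟨hq, hr⟩ := isAlgebraic_of_add_of_mul hqr_add hqr_mul
  exact ⟨hp, hq, hr, hs⟩

end CentralScalar

section AlgebraicIndependence

open MvPolynomial

/-- `centralScalar` at the generic parameters `a, b, c` and the generic Casimir value. -/
def genericScalar (K : Type*) [CommRing K] : Fin 4 → MvPolynomial (Fin 4) K :=
  centralScalar (X 0 * (X 0 + 1)) (X 1 * (X 1 + 1)) (X 2 * (X 2 + 1)) (X 3)

variable (K : Type*) [Field K] [NeZero (2 : K)]

theorem isAlgebraic_adjoin_genericScalar :
    Algebra.IsAlgebraic (Algebra.adjoin K (Set.range (genericScalar K)))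
      (MvPolynomial (Fin 4) K) := by
  have : NeZero (2 : MvPolynomial (Fin 4) K) :=
    ⟨by simpa only [map_ofNat, map_zero] using (C_injective (Fin 4) K).ne two_ne_zero⟩
  have hd : (X 0 * (X 0 + 1) + X 3 - X 1 * (X 1 + 1) - X 2 * (X 2 + 1) :
      MvPolynomial (Fin 4) K) ≠ 0 := fun h0 ↦ by
    simpa using congrArg (eval ![0, 0, 0, 1]) h0
  obtain ⟨hp, hq, hr, hs⟩ := isAlgebraic_of_centralScalar
    (G := Algebra.adjoin K (Set.range (genericScalar K))) hd
    fun i ↦ ⟨⟨genericScalar K i, Algebra.subset_adjoin ⟨i, rfl⟩⟩, rfl⟩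
  have hX (i : Fin 4) : IsAlgebraic (Algebra.adjoin K (Set.range (genericScalar K)))
      (X i : MvPolynomial (Fin 4) K) := by
    fin_cases i
    exacts [isAlgebraic_of_mul_add_one hp, isAlgebraic_of_mul_add_one hq,
      isAlgebraic_of_mul_add_one hr, hs]
  refine ⟨fun w ↦ ?_⟩
  induction w using MvPolynomial.induction_on with
  | C c => exact isAlgebraic_algebraMap (algebraMap K (Algebra.adjoin K _) c)
  | add x y hx hy => exact hx.add hy
  | mul_X x i hx => exact hx.mul (hX i)

theorem algebraicIndependent_genericScalar : AlgebraicIndependent K (genericScalar K) := by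
  have := isAlgebraic_adjoin_genericScalar K
  refine (Algebra.IsAlgebraic.isTranscendenceBasis_of_lift_le_trdeg_of_finite K
    (genericScalar K) ?_).1
  rw [MvPolynomial.trdeg_of_isDomain]
  simp

end AlgebraicIndependence

/-- The defining relations of the Racah algebra, for elements of an arbitrary ring: `α, β, γ` are
the elements called so in the presentation, and `A + B + C` is `δ`. -/
structure RacahRelations {S : Type*} [Ring S] (A B C D α β γ : S) : Prop where
  comm_AB : A * B - B * A = 2 * D
  comm_BC : B * C - C * B = 2 * D
  comm_CA : C * A - A * C = 2 * D
  comm_AD : A * D - D * A = α - A * C + B * A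
  comm_BD : B * D - D * B = β - B * A + C * B
  comm_CD : C * D - D * C = γ - C * B + A * C
  commute_alpha : ∀ x, Commute α x
  commute_beta : ∀ x, Commute β x
  commute_gamma : ∀ x, Commute γ x
  commute_delta : ∀ x, Commute (A + B + C) x

/-- The Casimir element `Ω_A` of the Racah algebra, with its term `(BAC + CAB)/2` rewritten so that
it makes sense without dividing by two. -/
def racahCasimir {S : Type*} [Ring S] (A B C D β γ : S) : S :=
  D ^ 2 + (B * A * C - A * D + D * B + D * C) + A ^ 2 + B * γ - C * β - A * (A + B + C)

namespace RacahRelations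

variable {S : Type*} [Ring S] {A B C D α β γ : S}

theorem add_add_eq_zero (rel : RacahRelations A B C D α β γ) : α + β + γ = 0 := by
  linear_combination (norm := noncomm_ring)
    (rel.commute_delta D).eq - rel.comm_AD - rel.comm_BD - rel.comm_CD

theorem two_mul_eq (rel : RacahRelations A B C D α β γ) :
    2 * (B * A * C - A * D + D * B + D * C) = B * A * C + C * A * B := by
  linear_combination (norm := noncomm_ring)
    A * rel.comm_BC - rel.comm_AB * C - rel.comm_CA * B

theorem commute_A_casimir (rel : RacahRelations A B C D α β γ) :
    Commute A (racahCasimir A B C D β γ) := by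
  obtain ⟨hAB, hBC, hCA, hAD, hBD, hCD, hα, hβ, hγ, hδ⟩ := id rel
  have hsum := rel.add_add_eq_zero
  rw [commute_iff_eq, racahCasimir]
  linear_combination (norm := noncomm_ring) hAD * D + D * hAD - B * hAD - A * hAD + hAD * B
    - hBD * A - A * hCD + hAB * A * C - B * A * hCA + D * hAB - D * hCA + hAB * γ + hCA * β
    - hAB * A + B * hAB - B * hCA + hBC * A + 2 * D * hsum - A * hsum + (hα D).eq + (hα B).eq
    - (hβ A).eq - B * (hγ A).eq + C * (hβ A).eq + A * (hδ A).eq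

theorem commute_B_casimir (rel : RacahRelations A B C D α β γ) :
    Commute B (racahCasimir A B C D β γ) := by
  obtain ⟨hAB, hBC, hCA, hAD, hBD, hCD, -, hβ, hγ, hδ⟩ := id rel
  have hsum := rel.add_add_eq_zero
  rw [commute_iff_eq, racahCasimir]
  linear_combination (norm := noncomm_ring) hBD * D + D * hBD + B * hAD + hBD * A - A * hBD
    + hBD * B + B * hCD - B * hAB * C + B * A * hBC + hAB * D - hBC * D - A * hAB - B * hAB
    - C * hAB - hBC * β - hBC * B + hCA * B + hAB * (A + B + C) + B * hsum + (hβ A).eq + (hβ B).eq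
    + (hβ D).eq + C * (hβ B).eq - B * (hγ B).eq + A * (hδ B).eq - 2 * (hδ D).eq

theorem B_mul_A (rel : RacahRelations A B C D α β γ) : B * A = A * B - 2 * D := by
  rw [← rel.comm_AB, sub_sub_cancel]

theorem D_mul_A (rel : RacahRelations A B C D α β γ) :
    D * A = A * D + (A + B + C) * A - A * A - 2 * (A * B) + 2 * D - α := by
  linear_combination (norm := noncomm_ring) rel.comm_AB - rel.comm_AD - (rel.commute_delta A).eq

theorem B_mul_D (rel : RacahRelations A B C D α β γ) :
    B * D = D * B + β - 2 * (A * B) + 2 * D + (A + B + C) * B - B * B := by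
  linear_combination (norm := noncomm_ring) rel.comm_BD + rel.comm_AB

theorem D_mul_D (rel : RacahRelations A B C D α β γ) :
    D * D = racahCasimir A B C D β γ + A * (A * B) + A * B * B - (A + B + C) * (A * B)
      + (A + B + C) * D - 2 * (A * D) - 2 * (D * B) - 2 * D + 2 * (A * B) + α + α * B
      + (A + B + C) * β - β * A := by
  rw [racahCasimir]
  linear_combination (norm := noncomm_ring) rel.comm_AB * C + (rel.commute_delta (A * B)).eq
    - A * rel.comm_AB - (rel.commute_delta D).eq + rel.comm_AD - rel.comm_AB
    - B * rel.add_add_eq_zero - (rel.commute_alpha B).eq + (rel.commute_beta A).eq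

theorem racahCasimir_eq (rel : RacahRelations A B C D α β γ) :
    racahCasimir A B C D β γ = D * D + A * C * B + 2 * (A * D + D * B + D - A * B)
      - (A + B + C) * (D + β) - α * (1 + B) + β * A := by
  linear_combination (norm := noncomm_ring) -rel.D_mul_D + (rel.commute_delta A).eq * B

end RacahRelations

section NormalForm

/-- The ordered monomial `A ^ i * D ^ ε * B ^ k` with `ε ∈ {0, 1}`, indexed by `(i, ε, k)`. -/
def racahMonomial {S : Type*} [Ring S] (A B D : S) (j : ℕ × Fin 2 × ℕ) : S :=
  A ^ j.1 * D ^ (j.2.1 : ℕ) * B ^ j.2.2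

/-- The span of the ordered monomials in `A, B, D` over a ring `Z` of central scalars. -/
def racahSpan (Z : Type*) {S : Type*} [CommRing Z] [Ring S] [Algebra Z S] (A B D : S) :
    Submodule Z S :=
  Submodule.span Z (Set.range (racahMonomial A B D))

variable {Z S : Type*} [CommRing Z] [Ring S] [Algebra Z S] {A B C D : S}

theorem pow_mul_pow_mul_pow_mem_racahSpan (i : ℕ) (ε : Fin 2) (k : ℕ) :
    A ^ i * D ^ (ε : ℕ) * B ^ k ∈ racahSpan Z A B D :=
  Submodule.subset_span ⟨(i, ε, k), rfl⟩

theorem A_mul_mem_racahSpan {x : S} (hx : x ∈ racahSpan Z A B D) : A * x ∈ racahSpan Z A B D := by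
  have hle : racahSpan Z A B D ≤ (racahSpan Z A B D).comap (LinearMap.mulLeft Z A) := by
    refine Submodule.span_le.2 ?_
    rintro _ ⟨⟨i, ε, k⟩, rfl⟩
    have hmem := pow_mul_pow_mul_pow_mem_racahSpan (Z := Z) (A := A) (B := B) (D := D) (i + 1) ε k
    simpa only [racahMonomial, SetLike.mem_coe, Submodule.mem_comap, LinearMap.mulLeft_apply,
      pow_succ', mul_assoc] using hmem
  exact hle hx

theorem mul_B_mem_racahSpan {x : S} (hx : x ∈ racahSpan Z A B D) : x * B ∈ racahSpan Z A B D := by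
  have hle : racahSpan Z A B D ≤ (racahSpan Z A B D).comap (LinearMap.mulRight Z B) := by
    refine Submodule.span_le.2 ?_
    rintro _ ⟨⟨i, ε, k⟩, rfl⟩
    have hmem := pow_mul_pow_mul_pow_mem_racahSpan (Z := Z) (A := A) (B := B) (D := D) i ε (k + 1)
    simpa only [racahMonomial, SetLike.mem_coe, Submodule.mem_comap, LinearMap.mulRight_apply,
      pow_succ, mul_assoc] using hmem
  exact hle hx

theorem mul_B_pow_mem_racahSpan {x : S} (hx : x ∈ racahSpan Z A B D) (k : ℕ) :
    x * B ^ k ∈ racahSpan Z A B D := by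
  induction k with
  | zero => rwa [pow_zero, mul_one]
  | succ k ih => exact pow_succ B k ▸ mul_assoc x (B ^ k) B ▸ mul_B_mem_racahSpan ih

theorem two_mul_mem_racahSpan {x : S} (hx : x ∈ racahSpan Z A B D) :
    2 * x ∈ racahSpan Z A B D :=
  two_mul x ▸ add_mem hx hx

theorem algebraMap_mul_mem_racahSpan (z : Z) {x : S} (hx : x ∈ racahSpan Z A B D) :
    algebraMap Z S z * x ∈ racahSpan Z A B D :=
  Algebra.smul_def z x ▸ Submodule.smul_mem _ z hx

theorem algebraMap_mem_racahSpan (z : Z) : algebraMap Z S z ∈ racahSpan Z A B D := by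
  simpa using algebraMap_mul_mem_racahSpan z
    (pow_mul_pow_mul_pow_mem_racahSpan (Z := Z) (A := A) (B := B) (D := D) 0 0 0)

variable {α β γ δ Ω : Z}

theorem B_mul_D_mem_racahSpan_and_D_mul_D_mem_racahSpan
    (rel : RacahRelations A B C D (algebraMap Z S α) (algebraMap Z S β) (algebraMap Z S γ))
    (hδ : A + B + C = algebraMap Z S δ)
    (hΩ : racahCasimir A B C D (algebraMap Z S β) (algebraMap Z S γ) = algebraMap Z S Ω) :
    B * D ∈ racahSpan Z A B D ∧ D * D ∈ racahSpan Z A B D := by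
  have hmonomial := pow_mul_pow_mul_pow_mem_racahSpan (Z := Z) (A := A) (B := B) (D := D)
  have hA : A ∈ racahSpan Z A B D := by simpa using hmonomial 1 0 0
  have hB : B ∈ racahSpan Z A B D := by simpa using hmonomial 0 0 1
  have hD : D ∈ racahSpan Z A B D := by simpa using hmonomial 0 1 0
  have hAB := A_mul_mem_racahSpan hB
  have hDB := mul_B_mem_racahSpan hD
  have hscalar (z : Z) : algebraMap Z S z ∈ racahSpan Z A B D := algebraMap_mem_racahSpan z
  have hsmul (z : Z) {x : S} (hx : x ∈ racahSpan Z A B D) := algebraMap_mul_mem_racahSpan z hx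
  constructor
  · rw [rel.B_mul_D, hδ]
    exact sub_mem (add_mem (add_mem (sub_mem (add_mem hDB (hscalar β))
      (two_mul_mem_racahSpan hAB)) (two_mul_mem_racahSpan hD)) (hsmul δ hB))
      (mul_B_mem_racahSpan hB)
  · rw [rel.D_mul_D, hδ, hΩ]
    exact sub_mem (add_mem (add_mem (add_mem (add_mem (sub_mem (sub_mem (sub_mem (add_mem (sub_mem
      (add_mem (add_mem (hscalar Ω) (A_mul_mem_racahSpan hAB)) (mul_B_mem_racahSpan hAB))
      (hsmul δ hAB)) (hsmul δ hD)) (two_mul_mem_racahSpan (A_mul_mem_racahSpan hD)))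
      (two_mul_mem_racahSpan hDB)) (two_mul_mem_racahSpan hD)) (two_mul_mem_racahSpan hAB))
      (hscalar α)) (hsmul α hB)) (hsmul δ (hscalar β))) (hsmul β hA)

theorem B_mul_mem_and_D_mul_mem_racahSpan_of_pow_mul_pow
    (rel : RacahRelations A B C D (algebraMap Z S α) (algebraMap Z S β) (algebraMap Z S γ))
    (hδ : A + B + C = algebraMap Z S δ)
    (hΩ : racahCasimir A B C D (algebraMap Z S β) (algebraMap Z S γ) = algebraMap Z S Ω)
    (i : ℕ) (ε : Fin 2) :
    B * (A ^ i * D ^ (ε : ℕ)) ∈ racahSpan Z A B D ∧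
      D * (A ^ i * D ^ (ε : ℕ)) ∈ racahSpan Z A B D := by
  have hmonomial := pow_mul_pow_mul_pow_mem_racahSpan (Z := Z) (A := A) (B := B) (D := D)
  induction i with
  | zero =>
    fin_cases ε
    · exact ⟨by simpa using hmonomial 0 0 1, by simpa using hmonomial 0 1 0⟩
    · simpa using B_mul_D_mem_racahSpan_and_D_mul_D_mem_racahSpan rel hδ hΩ
  | succ i ih =>
    obtain ⟨hBw, hDw⟩ := ih
    have hw : A ^ i * D ^ (ε : ℕ) ∈ racahSpan Z A B D := by simpa using hmonomial i ε 0
    rw [pow_succ', mul_assoc A, ← mul_assoc B A, ← mul_assoc D A, rel.B_mul_A, rel.D_mul_A, hδ]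
    simp only [add_mul, sub_mul, mul_assoc]
    exact ⟨sub_mem (A_mul_mem_racahSpan hBw) (two_mul_mem_racahSpan hDw),
      sub_mem (add_mem (sub_mem (sub_mem (add_mem (A_mul_mem_racahSpan hDw)
        (algebraMap_mul_mem_racahSpan δ (A_mul_mem_racahSpan hw)))
        (A_mul_mem_racahSpan (A_mul_mem_racahSpan hw)))
        (two_mul_mem_racahSpan (A_mul_mem_racahSpan hBw))) (two_mul_mem_racahSpan hDw))
        (algebraMap_mul_mem_racahSpan α hw)⟩

theorem B_mul_mem_and_D_mul_mem_racahSpan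
    (rel : RacahRelations A B C D (algebraMap Z S α) (algebraMap Z S β) (algebraMap Z S γ))
    (hδ : A + B + C = algebraMap Z S δ)
    (hΩ : racahCasimir A B C D (algebraMap Z S β) (algebraMap Z S γ) = algebraMap Z S Ω)
    {x : S} (hx : x ∈ racahSpan Z A B D) :
    B * x ∈ racahSpan Z A B D ∧ D * x ∈ racahSpan Z A B D := by
  have hle : racahSpan Z A B D ≤ (racahSpan Z A B D).comap (LinearMap.mulLeft Z B) ⊓
      (racahSpan Z A B D).comap (LinearMap.mulLeft Z D) := by
    refine Submodule.span_le.2 ?_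
    rintro _ ⟨⟨i, ε, k⟩, rfl⟩
    obtain ⟨hB, hD⟩ := B_mul_mem_and_D_mul_mem_racahSpan_of_pow_mul_pow rel hδ hΩ i ε
    change B * (A ^ i * D ^ (ε : ℕ) * B ^ k) ∈ racahSpan Z A B D ∧
      D * (A ^ i * D ^ (ε : ℕ) * B ^ k) ∈ racahSpan Z A B D
    rw [← mul_assoc B, ← mul_assoc D]
    exact ⟨mul_B_pow_mem_racahSpan hB k, mul_B_pow_mem_racahSpan hD k⟩
  exact hle hx

theorem racahSpan_eq_top
    (rel : RacahRelations A B C D (algebraMap Z S α) (algebraMap Z S β) (algebraMap Z S γ))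
    (hδ : A + B + C = algebraMap Z S δ)
    (hΩ : racahCasimir A B C D (algebraMap Z S β) (algebraMap Z S γ) = algebraMap Z S Ω)
    (hgen : Algebra.adjoin Z {A, B, C} = ⊤) : racahSpan Z A B D = ⊤ := by
  have hclosed (x y : S) (hy : y ∈ racahSpan Z A B D) : x * y ∈ racahSpan Z A B D := by
    have hBy := (B_mul_mem_and_D_mul_mem_racahSpan rel hδ hΩ hy).1
    have hx : x ∈ Algebra.adjoin Z {A, B, C} := hgen ▸ Algebra.mem_top
    induction hx using Algebra.adjoin_induction generalizing y with
    | mem x hx =>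
      rcases hx with rfl | rfl | rfl
      · exact A_mul_mem_racahSpan hy
      · exact hBy
      · rw [eq_sub_of_add_eq' hδ, sub_mul, add_mul]
        exact sub_mem (algebraMap_mul_mem_racahSpan δ hy) (add_mem (A_mul_mem_racahSpan hy) hBy)
    | algebraMap z => exact algebraMap_mul_mem_racahSpan z hy
    | add x₁ x₂ _ _ h₁ h₂ => exact add_mul x₁ x₂ y ▸ add_mem (h₁ y hy hBy) (h₂ y hy hBy)
    | mul x₁ x₂ _ _ h₁ h₂ =>
      have hx₂y := h₂ y hy hBy
      exact mul_assoc x₁ x₂ y ▸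
        h₁ (x₂ * y) hx₂y (B_mul_mem_and_D_mul_mem_racahSpan rel hδ hΩ hx₂y).1
  refine eq_top_iff.2 fun x _ ↦ mul_one x ▸ hclosed x 1 ?_
  simpa using algebraMap_mem_racahSpan (A := A) (B := B) (D := D) (1 : Z)

end NormalForm

section RacahAlgebra

theorem A_mul_B_sub_B_mul_A : A F * B F - B F * A F = 2 * D F := by
  have hrel := RingQuot.mkAlgHom_rel F (racahRel.AB (F := F))
  simp only [map_sub, map_mul, map_ofNat] at hrel
  exact hrel

theorem B_mul_C_sub_C_mul_B : B F * C F - C F * B F = 2 * D F := by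
  have hrel := RingQuot.mkAlgHom_rel F (racahRel.BC (F := F))
  simp only [map_sub, map_mul, map_ofNat] at hrel
  exact hrel

theorem C_mul_A_sub_A_mul_C : C F * A F - A F * C F = 2 * D F := by
  have hrel := RingQuot.mkAlgHom_rel F (racahRel.CA (F := F))
  simp only [map_sub, map_mul, map_ofNat] at hrel
  exact hrel

theorem commute_add_add_of_sub_eq_sub {S : Type*} [Ring S] {x y z : S}
    (h : x * y - y * x = z * x - x * z) : Commute (x + y + z) x := by
  rw [commute_iff_eq]
  linear_combination (norm := noncomm_ring) -h

variable [NeZero (2 : F)]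

theorem adjoin_A_B_C_eq_top : Algebra.adjoin F {A F, B F, C F} = ⊤ := by
  let S := Algebra.adjoin F {A F, B F, C F}
  have hA : A F ∈ S := Algebra.subset_adjoin (by simp)
  have hB : B F ∈ S := Algebra.subset_adjoin (by simp)
  have hC : C F ∈ S := Algebra.subset_adjoin (by simp)
  have hD : D F ∈ S := by
    have hcomm : A F * B F - B F * A F = (2 : F) • D F := by
      rw [A_mul_B_sub_B_mul_A, two_mul, two_smul]
    rw [← inv_smul_eq_iff₀ two_ne_zero] at hcomm
    exact hcomm ▸ S.smul_mem (S.sub_mem (S.mul_mem hA hB) (S.mul_mem hB hA)) _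
  have hsurj := (AlgHom.range_eq_top _).2 (RingQuot.mkAlgHom_surjective F (racahRel F))
  rw [eq_top_iff, ← hsurj, ← Algebra.map_top, ← FreeAlgebra.adjoin_range_ι, AlgHom.map_adjoin,
    Algebra.adjoin_le_iff]
  rintro _ ⟨_, ⟨i, rfl⟩, rfl⟩
  fin_cases i
  exacts [hA, hB, hC, hD]

variable {F} in
theorem commute_of_commute_A_B_C {z : Racah F} (hA : Commute z (A F)) (hB : Commute z (B F))
    (hC : Commute z (C F)) (x : Racah F) : Commute z x := by
  have hx : x ∈ Algebra.adjoin F {A F, B F, C F} := adjoin_A_B_C_eq_top F ▸ Algebra.mem_top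
  induction hx using Algebra.adjoin_induction with
  | mem x hx => rcases hx with rfl | rfl | rfl <;> assumption
  | algebraMap c => exact (Algebra.commutes c z).symm
  | add x y _ _ hx hy => exact hx.add_right hy
  | mul x y _ _ hx hy => exact hx.mul_right hy

theorem commute_alpha (x : Racah F) : Commute (alpha F) x := by
  have hgen (i : Fin 4) := RingQuot.mkAlgHom_rel F (racahRel.calpha (F := F) i)
  simp only [falpha, map_add, map_sub, map_mul] at hgen
  exact commute_of_commute_A_B_C (hgen 0) (hgen 1) (hgen 2) x

theorem commute_beta (x : Racah F) : Commute (beta F) x := by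
  have hgen (i : Fin 4) := RingQuot.mkAlgHom_rel F (racahRel.cbeta (F := F) i)
  simp only [fbeta, map_add, map_sub, map_mul] at hgen
  exact commute_of_commute_A_B_C (hgen 0) (hgen 1) (hgen 2) x

theorem commute_gamma (x : Racah F) : Commute (gamma F) x := by
  have hgen (i : Fin 4) := RingQuot.mkAlgHom_rel F (racahRel.cgamma (F := F) i)
  simp only [fgamma, map_add, map_sub, map_mul] at hgen
  exact commute_of_commute_A_B_C (hgen 0) (hgen 1) (hgen 2) x

theorem commute_delta (x : Racah F) : Commute (delta F) x := by
  have hAB := A_mul_B_sub_B_mul_A F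
  have hBC := B_mul_C_sub_C_mul_B F
  have hCA := C_mul_A_sub_A_mul_C F
  have hA := commute_add_add_of_sub_eq_sub (hAB.trans hCA.symm)
  have hB := commute_add_add_of_sub_eq_sub (hBC.trans hAB.symm)
  have hC := commute_add_add_of_sub_eq_sub (hCA.trans hBC.symm)
  rw [← add_rotate] at hB
  rw [add_rotate] at hC
  exact commute_of_commute_A_B_C hA hB hC x

theorem racahRelations :
    RacahRelations (A F) (B F) (C F) (D F) (alpha F) (beta F) (gamma F) where
  comm_AB := A_mul_B_sub_B_mul_A F
  comm_BC := B_mul_C_sub_C_mul_B F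
  comm_CA := C_mul_A_sub_A_mul_C F
  comm_AD := by rw [alpha]; abel
  comm_BD := by rw [beta]; abel
  comm_CD := by rw [gamma]; abel
  commute_alpha := commute_alpha F
  commute_beta := commute_beta F
  commute_gamma := commute_gamma F
  commute_delta := commute_delta F

theorem OmegaA_eq_racahCasimir :
    OmegaA F = racahCasimir (A F) (B F) (C F) (D F) (beta F) (gamma F) := by
  have hsymm := (racahRelations F).two_mul_eq
  rw [two_mul, ← two_smul F, eq_comm, ← inv_smul_eq_iff₀ two_ne_zero] at hsymm
  rw [OmegaA, hsymm, racahCasimir, delta]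

theorem commute_OmegaA (x : Racah F) : Commute (OmegaA F) x := by
  have hA : Commute (OmegaA F) (A F) :=
    OmegaA_eq_racahCasimir F ▸ (racahRelations F).commute_A_casimir.symm
  have hB : Commute (OmegaA F) (B F) :=
    OmegaA_eq_racahCasimir F ▸ (racahRelations F).commute_B_casimir.symm
  have hC : Commute (OmegaA F) (C F) := by
    rw [eq_sub_of_add_eq' (rfl : A F + B F + C F = delta F)]
    exact (commute_delta F _).symm.sub_right (hA.add_right hB)
  exact commute_of_commute_A_B_C hA hB hC x

/-- The homomorphism `F[X₀, X₁, X₂, X₃] → ℜ` sending the indeterminates to the central elements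
`α, β, δ, Ω_A`; it makes the Racah algebra an algebra over the polynomial ring. -/
def centralHom : MvPolynomial (Fin 4) F →ₐ[F] Racah F :=
  (Subalgebra.center F (Racah F)).val.comp <| MvPolynomial.aeval
    ![⟨alpha F, Subalgebra.mem_center_iff.2 fun x ↦ (commute_alpha F x).symm⟩,
      ⟨beta F, Subalgebra.mem_center_iff.2 fun x ↦ (commute_beta F x).symm⟩,
      ⟨delta F, Subalgebra.mem_center_iff.2 fun x ↦ (commute_delta F x).symm⟩,
      ⟨OmegaA F, Subalgebra.mem_center_iff.2 fun x ↦ (commute_OmegaA F x).symm⟩]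

theorem centralHom_X (i : Fin 4) :
    centralHom F (MvPolynomial.X i) = ![alpha F, beta F, delta F, OmegaA F] i := by
  rw [centralHom, AlgHom.comp_apply, MvPolynomial.aeval_X]
  fin_cases i <;> rfl

theorem commute_centralHom (p : MvPolynomial (Fin 4) F) (x : Racah F) :
    Commute (centralHom F p) x :=
  (Subalgebra.mem_center_iff.1 (Subtype.prop _) x).symm

instance : Algebra (MvPolynomial (Fin 4) F) (Racah F) :=
  (centralHom F).toRingHom.toAlgebra' (commute_centralHom F)

theorem racahSpan_racah_eq_top :
    racahSpan (MvPolynomial (Fin 4) F) (A F) (B F) (D F) = ⊤ := by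
  let Z := MvPolynomial (Fin 4) F
  have hα : algebraMap Z (Racah F) (MvPolynomial.X 0) = alpha F := centralHom_X F 0
  have hβ : algebraMap Z (Racah F) (MvPolynomial.X 1) = beta F := centralHom_X F 1
  have hδ : algebraMap Z (Racah F) (MvPolynomial.X 2) = delta F := centralHom_X F 2
  have hΩ : algebraMap Z (Racah F) (MvPolynomial.X 3) = OmegaA F := centralHom_X F 3
  have hγ : algebraMap Z (Racah F) (-(MvPolynomial.X 0 + MvPolynomial.X 1)) = gamma F := by
    rw [map_neg, map_add, hα, hβ]
    exact neg_eq_of_add_eq_zero_right (racahRelations F).add_add_eq_zero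
  have : IsScalarTower F Z (Racah F) :=
    .of_algebraMap_eq fun c ↦ ((centralHom F).commutes c).symm
  have hle : Algebra.adjoin F {A F, B F, C F} ≤
      (Algebra.adjoin Z {A F, B F, C F}).restrictScalars F :=
    Algebra.adjoin_le Algebra.subset_adjoin
  have hgen : Algebra.adjoin Z {A F, B F, C F} = ⊤ :=
    eq_top_iff.2 fun x _ ↦ hle (adjoin_A_B_C_eq_top F ▸ Algebra.mem_top)
  have rel := racahRelations F
  have hcasimir := OmegaA_eq_racahCasimir F
  rw [← hα, ← hβ, ← hγ] at rel
  rw [← hβ, ← hγ, ← hΩ] at hcasimir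
  exact racahSpan_eq_top rel hδ.symm hcasimir.symm hgen

end RacahAlgebra

section Representation

variable {K : Type*} [CommRing K]

/-- The eigenvalue of `h / 2` at `n` in the representation `slRep`. -/
def halfWeight (y : K) (n : ℤ) : K := y + n

theorem halfWeight_add_one (y : K) (n : ℤ) : halfWeight y (n + 1) = halfWeight y n + 1 := by
  rw [halfWeight, halfWeight, Int.cast_add, Int.cast_one, add_assoc]

theorem halfWeight_sub_one (y : K) (n : ℤ) : halfWeight y (n - 1) = halfWeight y n - 1 := by
  rw [halfWeight, halfWeight, Int.cast_sub, Int.cast_one, add_sub_assoc]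

/-- The operator by which `e` acts on the module `ℤ → K` of `slRep`. -/
def raise : Module.End K (ℤ → K) where
  toFun v n := v (n - 1)
  map_add' _ _ := rfl
  map_smul' _ _ := rfl

/-- The operator by which `f` acts on the module `ℤ → K` of `slRep`. -/
def lower (s y : K) : Module.End K (ℤ → K) where
  toFun v n := (s - halfWeight y n * (halfWeight y n + 1)) * v (n + 1)
  map_add' v w := by ext n; simp only [Pi.add_apply, mul_add]
  map_smul' c v := by ext n; simp only [Pi.smul_apply, smul_eq_mul, RingHom.id_apply]; ring

/-- The operator by which `h` acts on the module `ℤ → K` of `slRep`. -/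
def weight (y : K) : Module.End K (ℤ → K) where
  toFun v n := 2 * halfWeight y n * v n
  map_add' v w := by ext n; simp only [Pi.add_apply, mul_add]
  map_smul' c v := by ext n; simp only [Pi.smul_apply, smul_eq_mul, RingHom.id_apply]; ring

theorem raise_apply (v : ℤ → K) (n : ℤ) : raise v n = v (n - 1) := rfl

theorem lower_apply (s y : K) (v : ℤ → K) (n : ℤ) :
    lower s y v n = (s - halfWeight y n * (halfWeight y n + 1)) * v (n + 1) := rfl

theorem weight_apply (y : K) (v : ℤ → K) (n : ℤ) : weight y v n = 2 * halfWeight y n * v n := rfl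

theorem weight_mul_raise_sub (y : K) : weight y * raise - raise * weight y = 2 * raise := by
  refine LinearMap.ext fun v ↦ funext fun n ↦ ?_
  simp only [two_mul, LinearMap.sub_apply, LinearMap.add_apply, Pi.sub_apply, Pi.add_apply,
    Module.End.mul_apply, raise_apply, weight_apply, halfWeight_sub_one]
  ring

theorem weight_mul_lower_sub (s y : K) :
    weight y * lower s y - lower s y * weight y = -(2 * lower s y) := by
  refine LinearMap.ext fun v ↦ funext fun n ↦ ?_
  simp only [two_mul, LinearMap.sub_apply, LinearMap.add_apply, LinearMap.neg_apply,
    Pi.sub_apply, Pi.add_apply, Pi.neg_apply, Module.End.mul_apply, lower_apply, weight_apply,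
    halfWeight_add_one]
  ring

theorem raise_mul_lower_sub (s y : K) : raise * lower s y - lower s y * raise = weight y := by
  refine LinearMap.ext fun v ↦ funext fun n ↦ ?_
  simp only [LinearMap.sub_apply, Pi.sub_apply, Module.End.mul_apply, raise_apply, lower_apply,
    weight_apply, sub_add_cancel, add_sub_cancel_right, halfWeight_sub_one]
  ring

variable [Algebra F K]

/-- The representation of `U(sl₂)` on `ℤ → K` in which `h / 2` acts at `n` by `halfWeight y n` and
the Casimir element acts by `s`. -/
def slRep (s y : K) : U F →ₐ[F] Module.End K (ℤ → K) :=
  RingQuot.liftAlgHom F ⟨FreeAlgebra.lift F ![raise, lower s y, weight y], by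
    intro p q hpq
    cases hpq <;> simp only [two_mul, map_add, map_sub, map_mul, map_neg, FreeAlgebra.lift_ι_apply,
      Matrix.cons_val]
    · rw [weight_mul_raise_sub, two_mul]
    · rw [weight_mul_lower_sub, two_mul]
    · rw [raise_mul_lower_sub]⟩

theorem slRep_e (s y : K) : slRep F s y (e F) = raise := by
  rw [slRep, e, RingQuot.liftAlgHom_mkAlgHom_apply, FreeAlgebra.lift_ι_apply]
  rfl

theorem slRep_f (s y : K) : slRep F s y (f F) = lower s y := by
  rw [slRep, f, RingQuot.liftAlgHom_mkAlgHom_apply, FreeAlgebra.lift_ι_apply]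
  rfl

theorem slRep_h (s y : K) : slRep F s y (h F) = weight y := by
  rw [slRep, h, RingQuot.liftAlgHom_mkAlgHom_apply, FreeAlgebra.lift_ι_apply]
  rfl

/-- The representation of `F[a,b,c] ⊗ U(sl₂)` extending `slRep` in which the indeterminates
act by the given scalars `a, b, c`. -/
def tensorRep (a b c s y : K) : T F →ₐ[F] Module.End K (ℤ → K) :=
  Algebra.TensorProduct.lift
    ((IsScalarTower.toAlgHom F K (Module.End K (ℤ → K))).comp (MvPolynomial.aeval ![a, b, c]))
    (slRep F s y) fun p u ↦
      Algebra.commutes (MvPolynomial.aeval ![a, b, c] p : K) (slRep F s y u)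

theorem tensorRep_tmul_apply (a b c s y : K) (p : P F) (u : U F) (v : ℤ → K) (n : ℤ) :
    tensorRep F a b c s y (p ⊗ₜ[F] u) v n =
      MvPolynomial.aeval ![a, b, c] p * slRep F s y u v n := by
  have htmul : tensorRep F a b c s y (p ⊗ₜ[F] u) = _ := Algebra.TensorProduct.lift_tmul _ _ _ p u
  rw [htmul]
  rfl

theorem aeval_pa (a b c : K) : MvPolynomial.aeval ![a, b, c] (pa F) = a :=
  MvPolynomial.aeval_X _ _

theorem aeval_pb (a b c : K) : MvPolynomial.aeval ![a, b, c] (pb F) = b :=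
  MvPolynomial.aeval_X _ _

theorem aeval_pc (a b c : K) : MvPolynomial.aeval ![a, b, c] (pc F) = c :=
  MvPolynomial.aeval_X _ _

variable [NeZero (2 : F)]

theorem slRep_uy_apply (s y : K) (v : ℤ → K) (n : ℤ) :
    slRep F s y (uy F) v n = halfWeight y n * v n := by
  rw [uy, map_smul, slRep_h, LinearMap.smul_apply, Pi.smul_apply, inv_smul_eq_iff₀ two_ne_zero,
    weight_apply, two_smul]
  ring

theorem slRep_ux_apply (s y : K) (v : ℤ → K) (n : ℤ) :
    slRep F s y (ux F) v n =
      -((s - halfWeight y n * (halfWeight y n + 1)) * v (n + 1)) - halfWeight y n * v n := by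
  rw [show ux F = -f F - uy F from rfl, map_sub, map_neg, slRep_f, LinearMap.sub_apply,
    LinearMap.neg_apply, Pi.sub_apply, Pi.neg_apply, lower_apply, slRep_uy_apply]

theorem slRep_uz_apply (s y : K) (v : ℤ → K) (n : ℤ) :
    slRep F s y (uz F) v n = v (n - 1) - halfWeight y n * v n := by
  rw [show uz F = e F - uy F from rfl, map_sub, slRep_e, LinearMap.sub_apply, Pi.sub_apply,
    raise_apply, slRep_uy_apply]

theorem tensorRep_Anat_apply (a b c s y : K) (v : ℤ → K) (n : ℤ) :
    tensorRep F a b c s y (Anat F) v n = (halfWeight y n + a) * (halfWeight y n + a + 1) * v n +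
      (a - b + c + 1 + halfWeight y n) *
        (s - halfWeight y n * (halfWeight y n + 1)) * v (n + 1) := by
  simp only [Anat, map_add, map_sub, map_mul, map_one, LinearMap.add_apply, LinearMap.sub_apply,
    Pi.add_apply, Pi.sub_apply, tensorRep_tmul_apply, Module.End.mul_apply, Module.End.one_apply,
    aeval_pa, aeval_pb, aeval_pc, slRep_ux_apply, slRep_uy_apply, halfWeight_add_one]
  ring

theorem tensorRep_Bnat_apply (a b c s y : K) (v : ℤ → K) (n : ℤ) :
    tensorRep F a b c s y (Bnat F) v n = (halfWeight y n - b) * (halfWeight y n - b - 1) * v n +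
      (b + c - a + 1 - halfWeight y n) * v (n - 1) := by
  simp only [Bnat, map_add, map_sub, map_mul, map_one, LinearMap.add_apply, LinearMap.sub_apply,
    Pi.add_apply, Pi.sub_apply, tensorRep_tmul_apply, Module.End.mul_apply, Module.End.one_apply,
    aeval_pa, aeval_pb, aeval_pc, slRep_uy_apply, slRep_uz_apply]
  ring

theorem tensorRep_Cnat_apply (a b c s y : K) (v : ℤ → K) (n : ℤ) :
    tensorRep F a b c s y (Cnat F) v n =
      (c * (c + 1) + s - 2 * halfWeight y n ^ 2 - 2 * (a - b) * halfWeight y n) * v n -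
      (b + c - a + 1 - halfWeight y n) * v (n - 1) -
      (a - b + c + 1 + halfWeight y n) *
        (s - halfWeight y n * (halfWeight y n + 1)) * v (n + 1) := by
  simp only [Cnat, map_add, map_sub, map_mul, map_one, LinearMap.add_apply, LinearMap.sub_apply,
    Pi.add_apply, Pi.sub_apply, tensorRep_tmul_apply, Module.End.mul_apply, Module.End.one_apply,
    aeval_pa, aeval_pb, aeval_pc, slRep_ux_apply, slRep_uz_apply, sub_add_cancel,
    halfWeight_sub_one]
  ring

theorem tensorRep_Dnat_apply (a b c s y : K) (v : ℤ → K) (n : ℤ) :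
    tensorRep F a b c s y (Dnat F) v n =
      (2 * halfWeight y n ^ 3 + 3 * (a - b) * halfWeight y n ^ 2 +
        ((a - b) ^ 2 - c * (c + 1) - s) * halfWeight y n - (a - b) * s) * v n +
      (halfWeight y n + a) * (b + c - a + 1 - halfWeight y n) * v (n - 1) +
      (halfWeight y n - b) * (a - b + c + 1 + halfWeight y n) *
        (s - halfWeight y n * (halfWeight y n + 1)) * v (n + 1) := by
  simp only [Dnat, map_add, map_sub, map_mul, map_one, LinearMap.add_apply, Pi.add_apply,
    tensorRep_tmul_apply, Module.End.mul_apply, aeval_pa, aeval_pb, aeval_pc, slRep_ux_apply,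
    slRep_uy_apply, slRep_uz_apply, sub_add_cancel,
    halfWeight_add_one, halfWeight_sub_one]
  ring

variable {F}

/-- The homomorphism `♮`, characterized by its values on the generators. -/
structure IsNatural (φ : Racah F →ₐ[F] T F) : Prop where
  map_A : φ (A F) = Anat F
  map_B : φ (B F) = Bnat F
  map_C : φ (C F) = Cnat F
  map_D : φ (D F) = Dnat F

namespace IsNatural

variable {φ : Racah F →ₐ[F] T F}

theorem tensorRep_delta (hφ : IsNatural φ) (a b c s y : K) :
    tensorRep F a b c s y (φ (delta F)) =
      algebraMap K _ (centralScalar (a * (a + 1)) (b * (b + 1)) (c * (c + 1)) s 2) := by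
  refine LinearMap.ext fun v ↦ funext fun n ↦ ?_
  simp only [delta, map_add, hφ.map_A, hφ.map_B, hφ.map_C, LinearMap.add_apply, Pi.add_apply,
    tensorRep_Anat_apply, tensorRep_Bnat_apply, tensorRep_Cnat_apply,
    Module.algebraMap_end_apply, Pi.smul_apply, smul_eq_mul, centralScalar, Matrix.cons_val]
  ring

theorem tensorRep_alpha (hφ : IsNatural φ) (a b c s y : K) :
    tensorRep F a b c s y (φ (alpha F)) =
      algebraMap K _ (centralScalar (a * (a + 1)) (b * (b + 1)) (c * (c + 1)) s 0) := by
  refine LinearMap.ext fun v ↦ funext fun n ↦ ?_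
  simp only [alpha, map_add, map_sub, map_mul, hφ.map_A, hφ.map_B, hφ.map_C, hφ.map_D,
    LinearMap.add_apply, LinearMap.sub_apply, Pi.add_apply, Pi.sub_apply, Module.End.mul_apply,
    tensorRep_Anat_apply, tensorRep_Bnat_apply, tensorRep_Cnat_apply, tensorRep_Dnat_apply,
    Module.algebraMap_end_apply, Pi.smul_apply, smul_eq_mul, centralScalar, Matrix.cons_val,
    sub_add_cancel, add_sub_cancel_right,
    halfWeight_add_one, halfWeight_sub_one]
  ring

theorem tensorRep_beta (hφ : IsNatural φ) (a b c s y : K) :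
    tensorRep F a b c s y (φ (beta F)) =
      algebraMap K _ (centralScalar (a * (a + 1)) (b * (b + 1)) (c * (c + 1)) s 1) := by
  refine LinearMap.ext fun v ↦ funext fun n ↦ ?_
  simp only [beta, map_add, map_sub, map_mul, hφ.map_A, hφ.map_B, hφ.map_C, hφ.map_D,
    LinearMap.add_apply, LinearMap.sub_apply, Pi.add_apply, Pi.sub_apply, Module.End.mul_apply,
    tensorRep_Anat_apply, tensorRep_Bnat_apply, tensorRep_Cnat_apply, tensorRep_Dnat_apply,
    Module.algebraMap_end_apply, Pi.smul_apply, smul_eq_mul, centralScalar, Matrix.cons_val,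
    sub_add_cancel, add_sub_cancel_right,
    halfWeight_add_one, halfWeight_sub_one]
  ring

theorem tensorRep_OmegaA (hφ : IsNatural φ) (a b c s y : K) :
    tensorRep F a b c s y (φ (OmegaA F)) =
      algebraMap K _ (centralScalar (a * (a + 1)) (b * (b + 1)) (c * (c + 1)) s 3) := by
  have rel := racahRelations F
  rw [OmegaA_eq_racahCasimir, rel.racahCasimir_eq, ← delta]
  refine LinearMap.ext fun v ↦ funext fun n ↦ ?_
  simp only [map_add, map_sub, map_mul, map_one, map_ofNat, hφ.map_A, hφ.map_B, hφ.map_C,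
    hφ.map_D, hφ.tensorRep_alpha, hφ.tensorRep_beta, hφ.tensorRep_delta, LinearMap.add_apply,
    LinearMap.sub_apply, Pi.add_apply, Pi.sub_apply, Module.End.mul_apply, Module.End.one_apply,
    Module.End.ofNat_apply, Module.algebraMap_end_apply, Pi.smul_apply, smul_eq_mul,
    nsmul_eq_mul, Nat.cast_ofNat, Pi.mul_apply, Pi.ofNat_apply,
    tensorRep_Anat_apply, tensorRep_Bnat_apply, tensorRep_Cnat_apply, tensorRep_Dnat_apply,
    centralScalar, Matrix.cons_val, sub_add_cancel, add_sub_cancel_right, halfWeight_add_one,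
    halfWeight_sub_one]
  ring

theorem tensorRep_centralHom (hφ : IsNatural φ) (a b c s y : K) (p : MvPolynomial (Fin 4) F) :
    tensorRep F a b c s y (φ (centralHom F p)) = algebraMap K _ (MvPolynomial.aeval
      (centralScalar (a * (a + 1)) (b * (b + 1)) (c * (c + 1)) s) p) := by
  have hhom : ((tensorRep F a b c s y).comp φ).comp (centralHom F) =
      (IsScalarTower.toAlgHom F K (Module.End K (ℤ → K))).comp (MvPolynomial.aeval
        (centralScalar (a * (a + 1)) (b * (b + 1)) (c * (c + 1)) s)) := by
    refine MvPolynomial.algHom_ext fun i ↦ ?_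
    simp only [AlgHom.comp_apply, centralHom_X, MvPolynomial.aeval_X]
    fin_cases i
    exacts [hφ.tensorRep_alpha a b c s y, hφ.tensorRep_beta a b c s y,
      hφ.tensorRep_delta a b c s y, hφ.tensorRep_OmegaA a b c s y]
  exact DFunLike.congr_fun hhom p

end IsNatural

end Representation

section LeadingTerm

open Polynomial

variable {R : Type*} [CommRing R]

/-- The leading term of a family `v` of polynomials: `n` is the last index at which `v` does not
vanish, and `d` is the degree of `v n`. -/
structure HasTop (v : ℤ → R[X]) (n : ℤ) (d : ℕ) : Prop where
  degree_eq : (v n).degree = d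
  eq_zero : ∀ m, n < m → v m = 0

theorem linearIndependent_of_hasTop [NoZeroDivisors R] {ι : Type*} {v : ι → ℤ → R[X]} {n : ι → ℤ}
    {d : ι → ℕ} (hv : ∀ i, HasTop (v i) (n i) (d i))
    (hinj : Function.Injective fun i ↦ (n i, d i)) : LinearIndependent R v := by
  refine linearIndependent_of_injective_top (κ := ℤ ×ₗ ℕ) (top := fun i ↦ toLex (n i, d i))
    (fun k ↦ (lcoeff R (ofLex k).2).comp (LinearMap.proj (ofLex k).1))
    (toLex.injective.comp hinj) (fun i ↦ coeff_ne_zero_of_eq_degree (hv i).degree_eq) ?_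
  intro i k hk
  change (v i (ofLex k).1).coeff (ofLex k).2 = 0
  rcases Prod.Lex.lt_iff.1 hk with hlt | ⟨heq, hlt⟩
  · rw [(hv i).eq_zero _ hlt, coeff_zero]
  · rw [← heq]
    exact coeff_eq_zero_of_degree_lt ((hv i).degree_eq ▸ Nat.cast_lt.2 hlt)

theorem degree_halfWeight_add_C [Nontrivial R] (n : ℤ) (r : R) :
    (halfWeight X n + Polynomial.C r).degree = 1 := by
  rw [halfWeight, add_assoc, ← C_eq_intCast, ← C_add, degree_X_add_C]

theorem add_sub_halfWeight_add_one (a b c : R) (n : ℤ) :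
    Polynomial.C b + Polynomial.C c - Polynomial.C a + 1 - halfWeight X (n + 1) =
      -(halfWeight X n + Polynomial.C (a - b - c)) := by
  rw [halfWeight_add_one, C_sub, C_sub]
  ring

theorem hasTop_single [Nontrivial R] : HasTop (Pi.single 0 1 : ℤ → R[X]) 0 0 where
  degree_eq := by rw [Pi.single_eq_same, degree_one, Nat.cast_zero]
  eq_zero _ hm := Pi.single_eq_of_ne hm.ne' 1

variable [Algebra F R]

/-- The representation `tensorRep` over `R[X]` with constant parameters `a, b, c, s` and with the
indeterminate as the parameter `y`. -/
def polyRep (a b c s : R) : T F →ₐ[F] Module.End R[X] (ℤ → R[X]) :=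
  tensorRep F (.C a) (.C b) (.C c) (.C s) X

variable [IsDomain R] [NeZero (2 : F)] (a b c s : R) {v : ℤ → R[X]} {n : ℤ} {d : ℕ}

theorem HasTop.polyRep_Anat (hv : HasTop v n d) :
    HasTop (polyRep F a b c s (Anat F) v) n (d + 2) where
  degree_eq := by
    rw [polyRep, tensorRep_Anat_apply, hv.eq_zero (n + 1) (lt_add_one n), mul_zero, add_zero,
      add_assoc, ← C_1, ← C_add, degree_mul, degree_mul, degree_halfWeight_add_C,
      degree_halfWeight_add_C, hv.degree_eq, one_add_one_eq_two, add_comm]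
    rfl
  eq_zero m hm := by
    rw [polyRep, tensorRep_Anat_apply, hv.eq_zero m hm, hv.eq_zero (m + 1) (by omega),
      mul_zero, mul_zero, add_zero]

theorem HasTop.polyRep_Bnat (hv : HasTop v n d) :
    HasTop (polyRep F a b c s (Bnat F) v) (n + 1) (d + 1) where
  degree_eq := by
    rw [polyRep, tensorRep_Bnat_apply, hv.eq_zero (n + 1) (lt_add_one n), mul_zero, zero_add,
      add_sub_cancel_right, add_sub_halfWeight_add_one, degree_mul, degree_neg,
      degree_halfWeight_add_C, hv.degree_eq, add_comm]
    rfl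
  eq_zero m hm := by
    rw [polyRep, tensorRep_Bnat_apply, hv.eq_zero m (by omega), hv.eq_zero (m - 1) (by omega),
      mul_zero, mul_zero, add_zero]

theorem HasTop.polyRep_Dnat (hv : HasTop v n d) :
    HasTop (polyRep F a b c s (Dnat F) v) (n + 1) (d + 2) where
  degree_eq := by
    rw [polyRep, tensorRep_Dnat_apply, hv.eq_zero (n + 1) (lt_add_one n),
      hv.eq_zero (n + 1 + 1) (by omega), mul_zero, mul_zero, zero_add, add_zero,
      add_sub_cancel_right, add_sub_halfWeight_add_one, degree_mul, degree_mul,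
      degree_neg, degree_halfWeight_add_C, degree_halfWeight_add_C, hv.degree_eq,
      one_add_one_eq_two, add_comm]
    rfl
  eq_zero m hm := by
    rw [polyRep, tensorRep_Dnat_apply, hv.eq_zero m (by omega), hv.eq_zero (m - 1) (by omega),
      hv.eq_zero (m + 1) (by omega), mul_zero, mul_zero, mul_zero, add_zero, add_zero]

theorem hasTop_polyRep_racahMonomial (i : ℕ) (ε : Fin 2) (k : ℕ) :
    HasTop (polyRep F a b c s (racahMonomial (Anat F) (Bnat F) (Dnat F) (i, ε, k))
      (Pi.single 0 1)) (k + ε.val) (k + 2 * ε.val + 2 * i) := by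
  have hB : HasTop (polyRep F a b c s (Bnat F ^ k) (Pi.single 0 1)) k k := by
    induction k with
    | zero => simpa using hasTop_single (R := R)
    | succ k ih =>
      rw [pow_succ', map_mul, Module.End.mul_apply, Nat.cast_add_one]
      exact ih.polyRep_Bnat F a b c s
  have hDB : HasTop (polyRep F a b c s (Dnat F ^ ε.val * Bnat F ^ k)
      (Pi.single 0 1)) (k + ε.val) (k + 2 * ε.val) := by
    fin_cases ε
    · simpa using hB
    · simpa using hB.polyRep_Dnat F a b c s
  rw [racahMonomial, mul_assoc]
  induction i with
  | zero => simpa using hDB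
  | succ i ih =>
    rw [pow_succ', mul_assoc, map_mul, Module.End.mul_apply, mul_add_one, ← add_assoc]
    exact ih.polyRep_Anat F a b c s

theorem linearIndependent_polyRep_racahMonomial :
    LinearIndependent R fun j ↦ polyRep F a b c s
      (racahMonomial (Anat F) (Bnat F) (Dnat F) j) (Pi.single 0 1) := by
  refine linearIndependent_of_hasTop
    (fun j ↦ hasTop_polyRep_racahMonomial F a b c s j.1 j.2.1 j.2.2) ?_
  rintro ⟨i, ε, k⟩ ⟨i', ε', k'⟩ h
  simp only [Prod.mk.injEq] at h ⊢
  omega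

end LeadingTerm

namespace IsNatural

open MvPolynomial

variable {F} [NeZero (2 : F)] {φ : Racah F →ₐ[F] T F}

/-- The map `ℜ → ℤ → F[X₀, X₁, X₂, X₃][X]` obtained by letting `♮` act on the vector supported at
`0`, for generic `a, b, c`, generic Casimir value and generic `y`. It is semilinear over the
substitution of `genericScalar` for the central elements `α, β, δ, Ω_A`. -/
def genericOrbit (hφ : IsNatural φ) :
    Racah F →ₛₗ[(aeval (genericScalar F) : MvPolynomial (Fin 4) F →ₐ[F] _).toRingHom]
      (ℤ → Polynomial (MvPolynomial (Fin 4) F)) where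
  toFun x := polyRep F (X 0) (X 1) (X 2) (X 3) (φ x) (Pi.single 0 1)
  map_add' x y := by rw [map_add, map_add, LinearMap.add_apply]
  map_smul' p x := by
    have hscalar : centralScalar (.C (X 0) * (.C (X 0) + 1)) (.C (X 1) * (.C (X 1) + 1))
        (.C (X 2) * (.C (X 2) + 1)) (.C (X 3)) = (algebraMap (MvPolynomial (Fin 4) F)
          (Polynomial (MvPolynomial (Fin 4) F)) ∘ genericScalar F : Fin 4 → _) := by
      funext i
      fin_cases i <;> simp [centralScalar, genericScalar]
    rw [Algebra.smul_def, map_mul, map_mul, Module.End.mul_apply]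
    change tensorRep F _ _ _ _ _ (φ (centralHom F p)) _ = _
    rw [hφ.tensorRep_centralHom, hscalar, aeval_algebraMap_apply, Module.algebraMap_end_apply,
      algebraMap_smul]
    rfl

theorem genericOrbit_racahMonomial (hφ : IsNatural φ) (j : ℕ × Fin 2 × ℕ) :
    hφ.genericOrbit (racahMonomial (A F) (B F) (D F) j) =
      polyRep F (X 0) (X 1) (X 2) (X 3)
        (racahMonomial (Anat F) (Bnat F) (Dnat F) j) (Pi.single 0 1) := by
  simp only [genericOrbit, LinearMap.coe_mk, AddHom.coe_mk, racahMonomial, map_mul, map_pow,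
    hφ.map_A, hφ.map_B, hφ.map_D]

end IsNatural

theorem statement3 (hchar : (2 : F) ≠ 0) (φ : Racah F →ₐ[F] T F)
    (hA : φ (A F) = Anat F) (hB : φ (B F) = Bnat F)
    (hC : φ (C F) = Cnat F) (hD : φ (D F) = Dnat F) :
    Function.Injective φ := by
  have : NeZero (2 : F) := ⟨hchar⟩
  have hφ : IsNatural φ := ⟨hA, hB, hC, hD⟩
  have hli : LinearIndependent (MvPolynomial (Fin 4) F)
      (hφ.genericOrbit ∘ racahMonomial (A F) (B F) (D F)) :=
    (funext hφ.genericOrbit_racahMonomial : hφ.genericOrbit ∘ _ = _) ▸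
      linearIndependent_polyRep_racahMonomial F _ _ _ _
  have hinj : Function.Injective hφ.genericOrbit :=
    injective_of_span_eq_top_of_linearIndependent (algebraicIndependent_genericScalar F)
      hφ.genericOrbit (racahSpan_racah_eq_top F) hli
  exact fun x y hxy ↦ hinj (congrArg (fun t ↦ polyRep F _ _ _ _ t _) hxy)

end RacahPaper
end
end
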